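/- For every n ≥ 2, the n-th symmetrized topological complexity of the real projective plane equals 2n+1: TC^Σ_n(ℝP^2) = 2n+1. -/

import Mathlib

open unitInterval

noncomputable section

/-- The point `j/(n-1)` of the unit interval, for `j : Fin n`.
These are the `n` evaluation points `0, 1/(n-1), …, (n-2)/(n-1), 1`. -/
def evalPt (n : ℕ) (j : Fin n) : unitInterval :=
  ⟨(j : ℝ) / ((n : ℝ) - 1), by
    have hn : 1 ≤ n := j.pos
    rcases eq_or_lt_of_le hn with h | h
    · have hn1 : n = 1 := h.symm
      subst hn1
      simp [Fin.fin_one_eq_zero j]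
    · have h1 : (0 : ℝ) < (n : ℝ) - 1 := by
        have : (1 : ℝ) < (n : ℝ) := by exact_mod_cast h
        linarith
      constructor
      · exact div_nonneg (Nat.cast_nonneg _) h1.le
      · rw [div_le_one h1]
        have hj : (j : ℕ) + 1 ≤ n := j.is_lt
        have : ((j : ℕ) : ℝ) + 1 ≤ (n : ℝ) := by exact_mod_cast hj
        linarith⟩

/-- Coordinate reversal (the involution `β`) on `n`-tuples:
`β·(x_1,…,x_n) = (x_n,…,x_1)`. -/
def rtuple {X : Type*} {n : ℕ} (x : Fin n → X) : Fin n → X := fun j => x j.rev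

/-- Path reversal (the involution `β`) on the free path space `C(I,X)`:
`(β·γ)(t) = γ(1-t)`. -/
def rpath {X : Type*} [TopologicalSpace X] (γ : C(unitInterval, X)) : C(unitInterval, X) :=
  γ.comp ⟨unitInterval.symm, unitInterval.continuous_symm⟩

/-- `X^n` can be covered by `k` open sets, on each of which there is a continuous
section of the evaluation map `e_n : C(I,X) → X^n`,
`γ ↦ (γ(0), γ(1/(n-1)), …, γ(1))`. -/
def HasPlanners (X : Type*) [TopologicalSpace X] (n k : ℕ) : Prop :=
  ∃ U : Fin k → Set (Fin n → X),
    (∀ i, IsOpen (U i)) ∧ (⋃ i, U i) = Set.univ ∧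
    (∀ i, ∃ s : C(U i, C(unitInterval, X)),
      ∀ x : U i, ∀ j : Fin n, s x (evalPt n j) = (x : Fin n → X) j)

/-- The `n`-th (ordinary, higher) topological complexity `TC_n(X)`, as a value in `ℕ∞`. -/
def TCn (X : Type*) [TopologicalSpace X] (n : ℕ) : ℕ∞ :=
  sInf {k : ℕ∞ | ∃ m : ℕ, (m : ℕ∞) = k ∧ HasPlanners X n m}

/-- `X^n` can be covered by `k` β-invariant open sets, on each of which there is a
continuous β-equivariant section of the evaluation map `e_n : C(I,X) → X^n`
(a bidirectional motion planner). -/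
def HasBidirPlanners (X : Type*) [TopologicalSpace X] (n k : ℕ) : Prop :=
  ∃ U : Fin k → Set (Fin n → X),
    (∀ i, IsOpen (U i)) ∧ (⋃ i, U i) = Set.univ ∧
    (∀ i, ∀ x ∈ U i, rtuple x ∈ U i) ∧
    (∀ i, ∃ s : C(U i, C(unitInterval, X)),
      (∀ x : U i, ∀ j : Fin n, s x (evalPt n j) = (x : Fin n → X) j) ∧
      (∀ x : U i, ∀ hx : rtuple (x : Fin n → X) ∈ U i,
        s ⟨rtuple (x : Fin n → X), hx⟩ = rpath (s x)))

/-- The `n`-th bidirectional topological complexity `TC^β_n(X)`, as a value in `ℕ∞`. -/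
def TCbeta (X : Type*) [TopologicalSpace X] (n : ℕ) : ℕ∞ :=
  sInf {k : ℕ∞ | ∃ m : ℕ, (m : ℕ∞) = k ∧ HasBidirPlanners X n m}

/-- The action of a permutation `sg ∈ Σ_n` on `n`-tuples (by permuting coordinates). -/
def permTuple {X : Type*} {n : ℕ} (sg : Equiv.Perm (Fin n)) (x : Fin n → X) : Fin n → X :=
  fun j => x (sg j)

/-- `X^n` can be covered by `k` `Σ_n`-invariant open sets, on each of which there is a
continuous `Σ_n`-equivariant section of `E_n : X^{J_n} → X^n`,
`(α_1,…,α_n) ↦ (α_1(1),…,α_n(1))`, where `X^{J_n}` is the space of `n`-tuples of paths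
with a common initial point. -/
def HasSymPlanners (X : Type*) [TopologicalSpace X] (n k : ℕ) : Prop :=
  ∃ U : Fin k → Set (Fin n → X),
    (∀ i, IsOpen (U i)) ∧ (⋃ i, U i) = Set.univ ∧
    (∀ i, ∀ sg : Equiv.Perm (Fin n), ∀ x ∈ U i, permTuple sg x ∈ U i) ∧
    (∀ i, ∃ s : C(U i, Fin n → C(unitInterval, X)),
      (∀ x : U i, ∀ j j' : Fin n, s x j 0 = s x j' 0) ∧
      (∀ x : U i, ∀ j : Fin n, s x j 1 = (x : Fin n → X) j) ∧
      (∀ x : U i, ∀ sg : Equiv.Perm (Fin n),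
        ∀ hx : permTuple sg (x : Fin n → X) ∈ U i,
        s ⟨permTuple sg (x : Fin n → X), hx⟩ = permTuple sg (s x)))

/-- The `n`-th symmetrized topological complexity `TC^Σ_n(X)`, as a value in `ℕ∞`. -/
def TCsym (X : Type*) [TopologicalSpace X] (n : ℕ) : ℕ∞ :=
  sInf {k : ℕ∞ | ∃ m : ℕ, (m : ℕ∞) = k ∧ HasSymPlanners X n m}

/-- The unit sphere `S^m ⊂ ℝ^{m+1}`. -/
abbrev Sph (m : ℕ) : Type :=
  Metric.sphere (0 : EuclideanSpace ℝ (Fin (m + 1))) 1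

end
noncomputable section

/-- The antipodal setoid on the sphere `S^m`, identifying `x` with `-x`. -/
def antipodalSetoid (m : ℕ) : Setoid (Sph m) where
  r x y := (x : EuclideanSpace ℝ (Fin (m + 1))) = (y : EuclideanSpace ℝ (Fin (m + 1))) ∨
    (x : EuclideanSpace ℝ (Fin (m + 1))) = -(y : EuclideanSpace ℝ (Fin (m + 1)))
  iseqv := by
    constructor
    · intro x; exact Or.inl rfl
    · intro x y h
      rcases h with h | h
      · exact Or.inl h.symm
      · exact Or.inr (by rw [h, neg_neg])
    · intro x y z h1 h2
      rcases h1 with h1 | h1 <;> rcases h2 with h2 | h2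
      · exact Or.inl (h1.trans h2)
      · exact Or.inr (h1.trans h2)
      · exact Or.inr (by rw [h1, h2])
      · exact Or.inl (by rw [h1, h2, neg_neg])

/-- Real projective `m`-space, the quotient of the unit sphere `S^m ⊂ ℝ^{m+1}`
by the antipodal involution. -/
def RP (m : ℕ) : Type := Quotient (antipodalSetoid m)

instance (m : ℕ) : TopologicalSpace (RP m) := instTopologicalSpaceQuotient

end

/-!
A motion planner on an open set compares, for each pair of entries of a tuple in `(S²)ⁿ`, given
lifts of these entries with the lifts along its paths. The sum of the two comparisons is continuous,
because the choice of a lift of the common initial point cancels. Thus `2n` planners trivialize `2n`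
classes of degree one on `(ℝP²)ⁿ`, each a sum of two generators, and their cup product vanishes if
the planners cover. Restricted along the map of odd degree from a Klein bottle to `ℝP²` in each
factor, the product is nonzero modulo two on a triangulated product of Klein bottles when `n ≥ 3`
and the pairs are chosen suitably. For `n = 2` the four classes agree and the product is
`6x²y² = 0`; there, equivariance is used to evaluate it on half of the fundamental cycle, which is
still a cycle modulo the exchange of the two factors.

For the upper bound, a line on which the `k`-th coordinate does not vanish is joined to the line
spanned by `(1, …, 1)` by a segment. A tuple is put in the open set indexed by the degree of a
monomial in the squared coordinates, one from each entry, that strictly dominates all others of that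
degree. For each degree the regions of its monomials are disjoint and permuted by `Σₙ`.
-/

section Cochains

variable {P : Type*} {m : ℕ}

/-- The simplicial coboundary, modulo two, of a cochain on ordered tuples of points. -/
def coboundary (Φ : (Fin m → P) → ZMod 2) (v : Fin (m + 1) → P) : ZMod 2 :=
  ∑ j : Fin (m + 1), Φ (j.removeNth v)

/-- The cup product `δg₀ ∪ ⋯ ∪ δgₘ₋₁` of the coboundaries of the 0-cochains `gᵢ`, modulo two. -/
def cupProd (g : Fin m → P → ZMod 2) (v : Fin (m + 1) → P) : ZMod 2 :=
  ∏ i : Fin m, (g i (v i.castSucc) + g i (v i.succ))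

theorem cupProd_succ (g : Fin (m + 1) → P → ZMod 2) (v : Fin (m + 2) → P) :
    cupProd g v = (g 0 (v 0) + g 0 (v 1)) * cupProd (Fin.tail g) (Fin.tail v) := by
  simp only [cupProd, Fin.prod_univ_succ]
  rfl

theorem coboundary_add (Φ Ψ : (Fin m → P) → ZMod 2) (v : Fin (m + 1) → P) :
    coboundary (fun w ↦ Φ w + Ψ w) v = coboundary Φ v + coboundary Ψ v :=
  Finset.sum_add_distrib

theorem tail_removeNth_succ (j : Fin (m + 1)) (v : Fin (m + 2) → P) :
    Fin.tail (j.succ.removeNth v) = j.removeNth (Fin.tail v) := by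
  ext i
  simp only [Fin.tail, Fin.removeNth_apply, Fin.succ_succAbove_succ]

theorem removeNth_succ_zero (j : Fin (m + 1)) (v : Fin (m + 2) → P) :
    j.succ.removeNth v 0 = v 0 := by
  rw [Fin.removeNth_apply, Fin.succ_succAbove_zero]

theorem coboundary_cup_zero_cochain (h : P → ZMod 2) (E : (Fin (m + 1) → P) → ZMod 2)
    (v : Fin (m + 2) → P) :
    coboundary (fun w ↦ h (w 0) * E w) v =
      (h (v 0) + h (v 1)) * E (Fin.tail v) + h (v 0) * coboundary E v := by
  have tail_zero : Fin.tail v 0 = v 1 := rfl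
  simp only [coboundary, Fin.sum_univ_succ, Fin.removeNth_zero, removeNth_succ_zero, tail_zero,
    ← Finset.mul_sum]
  linear_combination -(h (v 0) * E (Fin.tail v)) * CharTwo.two_eq_zero (R := ZMod 2)

theorem coboundary_cup_one_cocycle (g : P → ZMod 2) (Φ : (Fin (m + 1) → P) → ZMod 2)
    (v : Fin (m + 3) → P) :
    coboundary (fun w : Fin (m + 2) → P ↦ (g (w 0) + g (w 1)) * Φ (Fin.tail w)) v =
      (g (v 0) + g (v 1)) * coboundary Φ (Fin.tail v) := by
  have tail_zero : Fin.tail v 0 = v 1 := rfl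
  have tail_one : Fin.tail v 1 = v 2 := rfl
  have later_vertex (j : Fin (m + 2)) :
      j.succ.removeNth v 1 = j.removeNth (Fin.tail v) 0 := by
    rw [← tail_removeNth_succ]
    rfl
  have tail_tail_zero : Fin.tail (Fin.tail v) 0 = v 2 := rfl
  simp only [coboundary, Fin.sum_univ_succ (n := m + 2), Fin.removeNth_zero, removeNth_succ_zero,
    tail_removeNth_succ, later_vertex]
  simp only [Fin.sum_univ_succ (n := m + 1), Fin.removeNth_zero, removeNth_succ_zero,
    tail_zero, tail_one, tail_tail_zero, mul_add, Finset.mul_sum]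
  linear_combination (g (v 2) * Φ (Fin.tail (Fin.tail v))) * CharTwo.two_eq_zero (R := ZMod 2)

theorem coboundary_cupProd (g : Fin m → P → ZMod 2) (v : Fin (m + 2) → P) :
    coboundary (cupProd g) v = 0 := by
  induction m with
  | zero => simp [coboundary, cupProd, CharTwo.two_eq_zero]
  | succ m ih =>
    rw [funext (cupProd_succ g), coboundary_cup_one_cocycle, ih, mul_zero]

/-- Two functions are twisted alike by a family `T` of transformations if each member of `T`
adds the same constant to both of them. -/
def TwistedAlike (T : Set (P → P)) (g g' : P → ZMod 2) : Prop :=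
  ∀ t ∈ T, ∃ c, (∀ p, g (t p) = g p + c) ∧ ∀ p, g' (t p) = g' p + c

/-- A cochain invariant under a family of transformations of the points. -/
def InvariantCochain (T : Set (P → P)) (Φ : (Fin m → P) → ZMod 2) : Prop :=
  ∀ t ∈ T, ∀ w, Φ (t ∘ w) = Φ w

theorem TwistedAlike.add_invariant {T : Set (P → P)} {g g' : P → ZMod 2}
    (h : TwistedAlike T g g') {t : P → P} (ht : t ∈ T) (p : P) :
    g (t p) + g' (t p) = g p + g' p := by
  obtain ⟨c, hg, hg'⟩ := h t ht
  rw [hg, hg', add_add_add_comm, CharTwo.add_self_eq_zero, add_zero]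

theorem TwistedAlike.coboundary_invariant {T : Set (P → P)} {g g' : P → ZMod 2}
    (h : TwistedAlike T g g') {t : P → P} (ht : t ∈ T) (p q : P) :
    g (t p) + g (t q) = g p + g q := by
  obtain ⟨c, hg, -⟩ := h t ht
  rw [hg, hg, add_add_add_comm, CharTwo.add_self_eq_zero, add_zero]

theorem TwistedAlike.symm {T : Set (P → P)} {g g' : P → ZMod 2} (h : TwistedAlike T g g') :
    TwistedAlike T g' g :=
  fun t ht ↦ (h t ht).imp fun _ ↦ And.symm

theorem invariantCochain_cupProd {T : Set (P → P)} {g g' : Fin m → P → ZMod 2}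
    (h : ∀ i, TwistedAlike T (g i) (g' i)) : InvariantCochain T (cupProd g) :=
  fun _ ht _ ↦ Finset.prod_congr rfl fun i _ ↦ (h i).coboundary_invariant ht _ _

theorem exists_invariant_primitive {T : Set (P → P)} (g g' : Fin (m + 1) → P → ZMod 2)
    (h : ∀ i, TwistedAlike T (g i) (g' i)) :
    ∃ Φ : (Fin (m + 1) → P) → ZMod 2, InvariantCochain T Φ ∧
      ∀ v, cupProd g v + cupProd g' v = coboundary Φ v := by
  induction m with
  | zero =>
    refine ⟨fun w ↦ g 0 (w 0) + g' 0 (w 0), fun t ht w ↦ (h 0).add_invariant ht _,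
      fun v ↦ ?_⟩
    have empty_product (f : Fin 0 → P → ZMod 2) (w) : cupProd f w = 1 := Fin.prod_univ_zero _
    rw [cupProd_succ, cupProd_succ, empty_product, empty_product, coboundary, Fin.sum_univ_two]
    simp only [Fin.removeNth_apply, Fin.succAbove_zero, Fin.succ_zero_eq_one,
      Fin.one_succAbove_zero]
    ring
  | succ m ih =>
    have tails (i) : TwistedAlike T (Fin.tail g i) (Fin.tail g' i) := h i.succ
    obtain ⟨Φ, Φ_invariant, cobounds⟩ :=
      ih (Fin.tail g) (Fin.tail g') tails
    refine ⟨fun w ↦ (g 0 (w 0) + g' 0 (w 0)) * cupProd (Fin.tail g) w +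
      (g' 0 (w 0) + g' 0 (w 1)) * Φ (Fin.tail w), fun t ht w ↦ ?_, fun v ↦ ?_⟩
    · have tail_comp : Fin.tail (t ∘ w) = t ∘ Fin.tail w := rfl
      simp only [Function.comp_apply, (h 0).add_invariant ht, tail_comp, Φ_invariant t ht,
        invariantCochain_cupProd tails t ht w, (h 0).symm.coboundary_invariant ht]
    · rw [coboundary_add, coboundary_cup_one_cocycle, ← cobounds,
        coboundary_cup_zero_cochain (fun p ↦ g 0 p + g' 0 p), coboundary_cupProd,
        cupProd_succ g, cupProd_succ g']
      linear_combination -((g' 0 (v 0) + g' 0 (v 1)) * cupProd (Fin.tail g) (Fin.tail v)) *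
        CharTwo.two_eq_zero (R := ZMod 2)

variable {ι : Type*}

/-- A fixed-point-free pairing of the members of a weighted family of simplices for which the
`j`-th faces of paired simplices agree modulo the transformations in `T`. -/
def FacePairing (T : Set (P → P)) (ω : ι → ZMod 2) (s : ι → Fin (m + 1) → P)
    (j : Fin (m + 1)) : Prop :=
  ∃ mate : ι → ι, Function.Involutive mate ∧ (∀ i, mate i ≠ i) ∧ (∀ i, ω (mate i) = ω i) ∧
    ∀ Φ : (Fin m → P) → ZMod 2, InvariantCochain T Φ →
      ∀ i, Φ (j.removeNth (s (mate i))) = Φ (j.removeNth (s i))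

variable [Fintype ι]

/-- A weighted family of ordered simplices is a cycle modulo the transformations in `T` if its
boundary pairs to zero with every `T`-invariant cochain. -/
def IsCycleModulo (T : Set (P → P)) (ω : ι → ZMod 2) (s : ι → Fin (m + 1) → P) : Prop :=
  ∀ Φ : (Fin m → P) → ZMod 2, InvariantCochain T Φ → ∑ i, ω i * coboundary Φ (s i) = 0

theorem IsCycleModulo.sum_cupProd_eq {T : Set (P → P)} {ω : ι → ZMod 2}
    {s : ι → Fin (m + 1) → P} (cycle : IsCycleModulo T ω s) {g g' : Fin m → P → ZMod 2}
    (h : ∀ i, TwistedAlike T (g i) (g' i)) :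
    ∑ i, ω i * cupProd g (s i) = ∑ i, ω i * cupProd g' (s i) := by
  cases m with
  | zero => simp [cupProd]
  | succ m =>
    obtain ⟨Φ, Φ_invariant, cobounds⟩ := exists_invariant_primitive g g' h
    rw [← CharTwo.add_eq_zero, ← Finset.sum_add_distrib, ← cycle Φ Φ_invariant]
    simp only [← cobounds, mul_add]

theorem isCycleModulo_of_faces {T : Set (P → P)} {ω : ι → ZMod 2} {s : ι → Fin (m + 1) → P}
    (pairing : ∀ j, FacePairing T ω s j) : IsCycleModulo T ω s := by
  intro Φ Φ_invariant
  simp only [coboundary, Finset.mul_sum]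
  rw [Finset.sum_comm]
  refine Finset.sum_eq_zero fun j _ ↦ ?_
  obtain ⟨mate, mate_involutive, mate_ne, ω_mate, Φ_mate⟩ := pairing j
  refine Finset.sum_involution (fun i _ ↦ mate i) (fun i _ ↦ ?_) (fun i _ _ ↦ mate_ne i)
    (fun i _ ↦ Finset.mem_univ _) fun i _ ↦ mate_involutive i
  rw [ω_mate, Φ_mate Φ Φ_invariant, CharTwo.add_self_eq_zero]

end Cochains

noncomputable section

/-- Oriented half-edges of the circle `ℤ / 2M`: the pair `(x, s)` is the half-edge from the odd
point `2x + 1` to the adjacent even point `2x + 1 + s`. -/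
abbrev HalfEdge (M : ℕ) : Type := ZMod M × ℤˣ

namespace HalfEdge

variable {M : ℕ}

/-- The odd endpoint of a half-edge, lifted to `[0, 2M]`. -/
def inner (e : HalfEdge M) : ℤ := 2 * e.1.val + 1

/-- The even endpoint of a half-edge, lifted to `[0, 2M]`. -/
def outer (e : HalfEdge M) : ℤ := e.inner + e.2

/-- The half-edge on the other side of the odd endpoint. -/
def flip (e : HalfEdge M) : HalfEdge M := (e.1, -e.2)

/-- The half-edge on the other side of the even endpoint. -/
def cross (e : HalfEdge M) : HalfEdge M := (e.1 + ((e.2 : ℤ) : ZMod M), -e.2)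

/-- The mirror image of a half-edge under `t ↦ 2M - t`. -/
def refl (e : HalfEdge M) : HalfEdge M := (-1 - e.1, -e.2)

/-- A half-edge is at the seam if its even endpoint is the base point of the circle. -/
def AtSeam (e : HalfEdge M) : Prop := (e.2 = 1 ∧ e.1 = -1) ∨ (e.2 = -1 ∧ e.1 = 0)

theorem inner_pos (e : HalfEdge M) : 0 < e.inner := by
  unfold inner
  positivity

theorem outer_nonneg (e : HalfEdge M) : 0 ≤ e.outer := by
  have := e.inner_pos
  obtain hs | hs := Int.units_eq_one_or e.2 <;> simp [outer, hs] <;> omega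

instance (e : HalfEdge M) : Decidable e.AtSeam := inferInstanceAs (Decidable (_ ∨ _))

theorem flip_flip (e : HalfEdge M) : e.flip.flip = e := by
  simp [flip]

theorem cross_cross (e : HalfEdge M) : e.cross.cross = e := by
  simp [cross]

theorem refl_refl (e : HalfEdge M) : e.refl.refl = e := by
  simp [refl]

theorem flip_ne (e : HalfEdge M) : e.flip ≠ e :=
  fun h ↦ units_ne_neg_self e.2 (congrArg Prod.snd h).symm

theorem cross_ne (e : HalfEdge M) : e.cross ≠ e :=
  fun h ↦ units_ne_neg_self e.2 (congrArg Prod.snd h).symm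

theorem inner_flip (e : HalfEdge M) : e.flip.inner = e.inner := rfl

theorem atSeam_cross {e : HalfEdge M} : e.cross.AtSeam ↔ e.AtSeam := by
  obtain ⟨x, s⟩ := e
  obtain rfl | rfl := Int.units_eq_one_or s <;>
    simp [cross, AtSeam, units_ne_neg_self, eq_neg_iff_add_eq_zero, ← sub_eq_add_neg,
      sub_eq_zero]

variable [NeZero M]

theorem val_neg_one : ((-1 : ZMod M).val : ℤ) = M - 1 := by
  obtain ⟨k, rfl⟩ := Nat.exists_eq_succ_of_ne_zero (NeZero.ne M)
  rw [ZMod.val_neg_one, Nat.cast_succ, add_sub_cancel_right]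

theorem val_neg_one_sub (x : ZMod M) : ((-1 - x).val : ℤ) = M - 1 - x.val := by
  have x_le : x.val ≤ (-1 : ZMod M).val := by
    have := x.val_lt
    have := val_neg_one (M := M)
    omega
  rw [ZMod.val_sub x_le, Nat.cast_sub x_le, val_neg_one]

theorem val_add_one {x : ZMod M} (hx : x ≠ -1) : (x + 1).val = x.val + 1 := by
  have x_lt : x.val + 1 < M := by
    have := x.val_lt
    have := val_neg_one (M := M)
    have := mt (fun h ↦ ZMod.val_injective M h) hx
    omega
  rw [← ZMod.val_cast_of_lt x_lt, Nat.cast_add, ZMod.natCast_zmod_val, Nat.cast_one]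

theorem inner_refl (e : HalfEdge M) : e.refl.inner = 2 * M - e.inner := by
  simp only [inner, refl, val_neg_one_sub]
  ring

theorem outer_refl (e : HalfEdge M) : e.refl.outer = 2 * M - e.outer := by
  simp only [outer, inner_refl]
  simp only [refl, Units.val_neg]
  ring

theorem outer_cross_of_not_atSeam {e : HalfEdge M} (h : ¬e.AtSeam) : e.cross.outer = e.outer := by
  have positive {f : HalfEdge M} (hf : ¬f.AtSeam) (hs : f.2 = 1) : f.cross.outer = f.outer := by
    obtain ⟨x, s⟩ := f
    obtain rfl : s = 1 := hs
    have hx : x ≠ -1 := fun hx ↦ hf (.inl ⟨rfl, hx⟩)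
    simp only [outer, inner, cross, Units.val_one, Int.cast_one, val_add_one hx, Units.val_neg]
    push_cast
    ring
  obtain hs | hs := Int.units_eq_one_or e.2
  · exact positive h hs
  · have := positive (mt atSeam_cross.1 h) (show -e.2 = 1 by rw [hs, neg_neg])
    rwa [cross_cross, eq_comm] at this

theorem outer_eq_outer_cross_add {e : HalfEdge M} (h : e.AtSeam) (hs : e.2 = 1) :
    e.outer = e.cross.outer + 2 * M := by
  obtain ⟨x, s⟩ := e
  obtain rfl : s = 1 := hs
  obtain ⟨-, rfl⟩ | ⟨h, -⟩ := h
  · simp only [outer, inner, cross, val_neg_one, Units.val_one, Int.cast_one, neg_add_cancel,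
      ZMod.val_zero, Units.val_neg]
    push_cast
    ring
  · exact absurd h (units_ne_neg_self 1)

theorem inner_lt (e : HalfEdge M) : e.inner < 2 * M := by
  have := e.1.val_lt
  unfold inner
  omega

theorem outer_le (e : HalfEdge M) : e.outer ≤ 2 * M := by
  have := e.inner_lt
  obtain hs | hs := Int.units_eq_one_or e.2 <;> simp [outer, hs] <;> omega

theorem outer_eq_iff {e : HalfEdge M} : e.outer = 2 * M ↔ e = (-1, 1) := by
  have lift_neg_one := val_neg_one (M := M)
  refine ⟨fun h ↦ ?_, fun h ↦ ?_⟩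
  · have := e.1.val_lt
    obtain hs | hs := Int.units_eq_one_or e.2
    · refine Prod.ext (ZMod.val_injective M (a₂ := -1) ?_) hs
      simp only [outer, inner, hs, Units.val_one] at h
      omega
    · simp only [outer, inner, hs, Units.val_neg, Units.val_one] at h
      omega
  · rw [h]
    simp only [outer, inner, lift_neg_one, Units.val_one]
    ring

end HalfEdge

/-- Vertices of the grid: `n` pairs of integers `(v, u)`, one pair for each block. -/
abbrev GridPoint (n : ℕ) : Type := Fin n → ℤ × ℤ

/-- The glide reflection of a block; together with `shift` it generates the deck group of a
Klein bottle. -/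
def glide (N : ℤ) (p : ℤ × ℤ) : ℤ × ℤ := (N - p.1, p.2 + N)

/-- The translation of the first coordinate of a block by a full period. -/
def shift (N : ℤ) (p : ℤ × ℤ) : ℤ × ℤ := (p.1 + N, p.2)

/-- The deck transformations of a single block, acting on all the blocks. -/
def blockMoves (n : ℕ) (N : ℤ) : Set (GridPoint n → GridPoint n) :=
  {t | ∃ b, (t = fun p ↦ Function.update p b (glide N (p b))) ∨
    t = fun p ↦ Function.update p b (shift N (p b))}

/-- The transformations of two blocks generated by deck moves and the exchange of the blocks. -/
def exchangeMoves (N : ℤ) : Set (GridPoint 2 → GridPoint 2) :=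
  insert (fun p ↦ p ∘ Equiv.swap 0 1) (blockMoves 2 N)

/-- An ordered top-dimensional simplex of the triangulated product of `n` Klein bottles: a cube,
given by a half-edge for each of the `2n` coordinates, and the order in which a monotone path
along the cube crosses its coordinates. Coordinate `(b, 0)` is the first coordinate of block `b`. -/
abbrev GridSimplex (n M : ℕ) : Type :=
  (Fin n × Fin 2 → HalfEdge M) × (Fin (n * 2) ≃ Fin n × Fin 2)

namespace GridSimplex

variable {n M : ℕ}

/-- The value of a coordinate at the `k`-th vertex. -/
def coord (y : GridSimplex n M) (k : ℕ) (c : Fin n × Fin 2) : ℤ :=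
  if (y.2.symm c : ℕ) < k then (y.1 c).outer else (y.1 c).inner

/-- The vertices in their order along the path. -/
def vertex (y : GridSimplex n M) (k : Fin (n * 2 + 1)) : GridPoint n :=
  fun b ↦ (y.coord k (b, 0), y.coord k (b, 1))

theorem removeNth_vertex {y z : GridSimplex n M} {j : Fin (n * 2 + 1)}
    {t : GridPoint n → GridPoint n} (h : ∀ k ≠ j, y.vertex k = t (z.vertex k)) :
    j.removeNth y.vertex = t ∘ j.removeNth z.vertex :=
  funext fun i ↦ h _ (Fin.succAbove_ne j i)

/-- Turn around at the odd endpoint of the half-edge of one coordinate. -/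
def flipAt (c : Fin n × Fin 2) (y : GridSimplex n M) : GridSimplex n M :=
  (Function.update y.1 c (y.1 c).flip, y.2)

theorem vertex_flipAt_last {a : Fin (n * 2)} (ha : (a : ℕ) + 1 = n * 2) (y : GridSimplex n M)
    {k : Fin (n * 2 + 1)} (hk : k ≠ Fin.last _) :
    (y.flipAt (y.2 a)).vertex k = y.vertex k := by
  have coord_eq (c) : (y.flipAt (y.2 a)).coord k c = y.coord k c := by
    obtain rfl | hc := eq_or_ne c (y.2 a)
    · have k_le : ¬(a : ℕ) < k := by
        have := Fin.val_lt_last hk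
        omega
      simp only [coord, flipAt, Equiv.symm_apply_apply, k_le, if_false, Function.update_self,
        HalfEdge.inner_flip]
    · simp only [coord, flipAt, Function.update_of_ne hc]
  ext b <;> exact coord_eq _

theorem flipAt_flipAt (c : Fin n × Fin 2) (y : GridSimplex n M) : (y.flipAt c).flipAt c = y := by
  simp [flipAt, HalfEdge.flip_flip]

theorem flipAt_ne (c : Fin n × Fin 2) (y : GridSimplex n M) : y.flipAt c ≠ y := by
  intro h
  have := congrArg (fun z : GridSimplex n M ↦ z.1 c) h
  simp only [flipAt, Function.update_self] at this
  exact HalfEdge.flip_ne _ this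

/-- Exchange two positions of the path. -/
def swapAt (a b : Fin (n * 2)) (y : GridSimplex n M) : GridSimplex n M :=
  (y.1, (Equiv.swap a b).trans y.2)

theorem vertex_swapAt {a b : Fin (n * 2)} (hab : (a : ℕ) + 1 = b) (y : GridSimplex n M)
    {k : Fin (n * 2 + 1)} (hk : (k : ℕ) ≠ b) : (y.swapAt a b).vertex k = y.vertex k := by
  have coord_eq (c) : (y.swapAt a b).coord k c = y.coord k c := by
    have same_side : ((Equiv.swap a b (y.2.symm c) : Fin (n * 2)) : ℕ) < k ↔
        (y.2.symm c : ℕ) < k := by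
      rw [Equiv.swap_apply_def]
      split_ifs with h h' <;> simp only [*] <;> omega
    simp only [coord, swapAt, Equiv.symm_trans_apply, Equiv.symm_swap, same_side]
  ext b <;> exact coord_eq _

theorem swapAt_swapAt (a b : Fin (n * 2)) (y : GridSimplex n M) :
    (y.swapAt a b).swapAt a b = y := by
  simp only [swapAt, ← Equiv.trans_assoc, Equiv.swap_swap, Equiv.refl_trans]

theorem swapAt_ne {a b : Fin (n * 2)} (hab : a ≠ b) (y : GridSimplex n M) :
    y.swapAt a b ≠ y := by
  intro h
  have := congrArg (fun z : GridSimplex n M ↦ z.2 a) h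
  simp only [swapAt, Equiv.trans_apply, Equiv.swap_apply_left] at this
  exact hab (y.2.injective this).symm

/-- Permute the blocks. -/
def permBlocks (ρ : Equiv.Perm (Fin n)) (y : GridSimplex n M) : GridSimplex n M :=
  (y.1 ∘ Prod.map ρ id, y.2.trans (ρ.symm.prodCongr (Equiv.refl _)))

theorem vertex_permBlocks (ρ : Equiv.Perm (Fin n)) (y : GridSimplex n M) (k : Fin (n * 2 + 1)) :
    (y.permBlocks ρ).vertex k = y.vertex k ∘ ρ := rfl

theorem swapAt_permBlocks (a b : Fin (n * 2)) (ρ : Equiv.Perm (Fin n)) (y : GridSimplex n M) :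
    (y.permBlocks ρ).swapAt a b = (y.swapAt a b).permBlocks ρ := rfl

theorem permBlocks_swap_swap (b c : Fin n) (y : GridSimplex n M) :
    (y.permBlocks (Equiv.swap b c)).permBlocks (Equiv.swap b c) = y := by
  refine Prod.ext (funext fun d ↦ ?_) (Equiv.ext fun i ↦ ?_) <;> simp [permBlocks, Prod.map]

/-- Cross to the other side of the even endpoint of the half-edge of the coordinate `c`. Where this
crosses the seam of the second coordinate of a block, the first coordinate is reflected. -/
def crossAt (c : Fin n × Fin 2) (y : GridSimplex n M) : GridSimplex n M :=
  (fun d ↦ if d = c then (y.1 c).cross else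
    if d = (c.1, 0) ∧ (y.1 c).AtSeam then (y.1 d).refl else y.1 d, y.2)

theorem crossAt_self (c : Fin n × Fin 2) (y : GridSimplex n M) :
    (y.crossAt c).1 c = (y.1 c).cross :=
  if_pos rfl

theorem crossAt_of_ne {c d : Fin n × Fin 2} {y : GridSimplex n M} (hdc : d ≠ c)
    (hd : ¬(d = (c.1, 0) ∧ (y.1 c).AtSeam)) : (y.crossAt c).1 d = y.1 d :=
  (if_neg hdc).trans (if_neg hd)

theorem crossAt_partner {c d : Fin n × Fin 2} {y : GridSimplex n M} (hdc : d ≠ c)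
    (hd : d = (c.1, 0) ∧ (y.1 c).AtSeam) : (y.crossAt c).1 d = (y.1 d).refl :=
  (if_neg hdc).trans (if_pos hd)

theorem crossAt_crossAt (c : Fin n × Fin 2) (y : GridSimplex n M) :
    (y.crossAt c).crossAt c = y := by
  refine Prod.ext (funext fun d ↦ ?_) rfl
  have atSeam_iff : ((y.crossAt c).1 c).AtSeam ↔ (y.1 c).AtSeam := by
    rw [crossAt_self, HalfEdge.atSeam_cross]
  obtain rfl | hdc := eq_or_ne d c
  · rw [crossAt_self, crossAt_self, HalfEdge.cross_cross]
  by_cases hd : d = (c.1, 0) ∧ (y.1 c).AtSeam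
  · rw [crossAt_partner hdc (by rwa [atSeam_iff]), crossAt_partner hdc hd, HalfEdge.refl_refl]
  · rw [crossAt_of_ne hdc (by rwa [atSeam_iff]), crossAt_of_ne hdc hd]

theorem crossAt_ne (c : Fin n × Fin 2) (y : GridSimplex n M) : y.crossAt c ≠ y := by
  intro h
  have := congrArg (fun z : GridSimplex n M ↦ z.1 c) h
  exact HalfEdge.cross_ne _ (this ▸ crossAt_self c y).symm

theorem coord_crossAt_of_ne {c d : Fin n × Fin 2} {y : GridSimplex n M} (hdc : d ≠ c)
    (hd : ¬(d = (c.1, 0) ∧ (y.1 c).AtSeam)) (k : ℕ) :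
    (y.crossAt c).coord k d = y.coord k d := by
  rw [coord, coord, crossAt_of_ne hdc hd]
  rfl

theorem coord_first {c : Fin n × Fin 2} {y : GridSimplex n M} (hc : (y.2.symm c : ℕ) = 0) {k : ℕ}
    (hk : 0 < k) : y.coord k c = (y.1 c).outer :=
  if_pos (hc ▸ hk)

variable {T : Set (GridPoint n → GridPoint n)} {ω : (Fin (n * 2) ≃ Fin n × Fin 2) → ZMod 2}

theorem facePairing_last (hn : 0 < n) :
    FacePairing T (fun y : GridSimplex n M ↦ ω y.2) vertex (Fin.last _) := by
  let last : Fin (n * 2) := ⟨n * 2 - 1, by omega⟩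
  have last_succ : (last : ℕ) + 1 = n * 2 := Nat.sub_add_cancel (by omega)
  exact ⟨fun y ↦ y.flipAt (y.2 last), fun y ↦ flipAt_flipAt _ y, fun y ↦ flipAt_ne _ y,
    fun _ ↦ rfl, fun Φ _ y ↦ congrArg Φ <| removeNth_vertex (t := id)
      fun _ ↦ vertex_flipAt_last last_succ y⟩

theorem facePairing_middle {a b : Fin (n * 2)} (hab : (a : ℕ) + 1 = b)
    (hω : ∀ π, ω ((Equiv.swap a b).trans π) = ω π) :
    FacePairing T (fun y : GridSimplex n M ↦ ω y.2) vertex b.castSucc :=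
  ⟨fun y ↦ y.swapAt a b, fun y ↦ swapAt_swapAt a b y,
    fun y ↦ swapAt_ne (fun h ↦ by simp [h] at hab) y, fun y ↦ hω y.2,
    fun Φ _ y ↦ congrArg Φ <| removeNth_vertex (t := id) fun _ hk ↦
      vertex_swapAt hab y fun h ↦ hk (Fin.ext h)⟩

/-- The indicator of the paths whose first step is in block `0`. Up to exchanging the two blocks
these are half of all paths. -/
def startsInBlockZero (π : Fin (2 * 2) ≃ Fin 2 × Fin 2) : ZMod 2 :=
  if (π 0).1 = 0 then 1 else 0

theorem facePairing_exchange : FacePairing (exchangeMoves (2 * M))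
    (fun y : GridSimplex 2 M ↦ startsInBlockZero y.2) vertex 1 := by
  let mate (y : GridSimplex 2 M) : GridSimplex 2 M :=
    if (y.2 0).1 = (y.2 1).1 then y.swapAt 0 1 else (y.swapAt 0 1).permBlocks (Equiv.swap 0 1)
  have mate_same {y : GridSimplex 2 M} (h : (y.2 0).1 = (y.2 1).1) : mate y = y.swapAt 0 1 :=
    if_pos h
  have mate_diff {y : GridSimplex 2 M} (h : (y.2 0).1 ≠ (y.2 1).1) :
      mate y = (y.swapAt 0 1).permBlocks (Equiv.swap 0 1) := if_neg h
  have swap_eq {b c : Fin 2} (h : b ≠ c) : Equiv.swap 0 1 c = b := by revert b c; decide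
  have swap_ne (b : Fin 2) : Equiv.swap 0 1 b ≠ b := by revert b; decide
  have diff_zero {y : GridSimplex 2 M} (h : (y.2 0).1 ≠ (y.2 1).1) :
      ((mate y).2 0).1 = (y.2 0).1 := by
    rw [mate_diff h]
    exact swap_eq h
  have diff_one {y : GridSimplex 2 M} (h : (y.2 0).1 ≠ (y.2 1).1) :
      ((mate y).2 1).1 = (y.2 1).1 := by
    rw [mate_diff h]
    exact swap_eq h.symm
  have diff_two {y : GridSimplex 2 M} (h : (y.2 0).1 ≠ (y.2 1).1) :
      ((mate y).2 2).1 = Equiv.swap 0 1 (y.2 2).1 := by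
    rw [mate_diff h]
    rfl
  have swapAt_vertex (y : GridSimplex 2 M) {k : Fin (2 * 2 + 1)} (hk : k ≠ 1) :
      (y.swapAt 0 1).vertex k = y.vertex k := vertex_swapAt rfl y fun h ↦ hk (Fin.ext h)
  refine ⟨mate, fun y ↦ ?_, fun y ↦ ?_, fun y ↦ ?_, fun Φ Φ_invariant y ↦ ?_⟩ <;>
    by_cases h : (y.2 0).1 = (y.2 1).1
  · rw [mate_same h, mate_same (by simp [swapAt, h]), swapAt_swapAt]
  · rw [mate_diff (y := mate y) (by rwa [diff_zero h, diff_one h]), mate_diff h,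
      swapAt_permBlocks, swapAt_swapAt, permBlocks_swap_swap]
  · exact mate_same h ▸ swapAt_ne (by decide) y
  · exact fun fixed ↦ swap_ne (y.2 2).1 (by rw [← diff_two h, fixed])
  · simp only [startsInBlockZero, mate_same h, swapAt, Equiv.trans_apply, Equiv.swap_apply_left, h]
  · simp only [startsInBlockZero, diff_zero h]
  · rw [mate_same h]
    exact congrArg Φ (removeNth_vertex (t := id) fun k hk ↦ swapAt_vertex y hk)
  · rw [mate_diff h, removeNth_vertex (z := y) (t := fun p ↦ p ∘ Equiv.swap 0 1)
      (fun k hk ↦ by rw [vertex_permBlocks, swapAt_vertex y hk]),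
      Φ_invariant _ (Set.mem_insert _ _)]

variable [NeZero M]

theorem coord_crossAt_partner {c : Fin n × Fin 2} {y : GridSimplex n M} (hc : (c.1, 0) ≠ c)
    (seam : (y.1 c).AtSeam) (k : ℕ) :
    (y.crossAt c).coord k (c.1, 0) = 2 * M - y.coord k (c.1, 0) := by
  have edge := crossAt_partner hc ⟨rfl, seam⟩
  have path : (y.crossAt c).2 = y.2 := rfl
  rw [coord, coord, edge, path, HalfEdge.outer_refl, HalfEdge.inner_refl, ← apply_ite]

theorem vertex_crossAt_of_not_atSeam {a : Fin (n * 2)} (ha : (a : ℕ) = 0) {y : GridSimplex n M}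
    (h : ¬(y.1 (y.2 a)).AtSeam) {k : Fin (n * 2 + 1)} (hk : k ≠ 0) :
    (y.crossAt (y.2 a)).vertex k = y.vertex k := by
  have coord_eq (d) : (y.crossAt (y.2 a)).coord k d = y.coord k d := by
    obtain rfl | hd := eq_or_ne d (y.2 a)
    · have k_pos := Fin.pos_iff_ne_zero.2 hk
      rw [coord_first (y := y.crossAt (y.2 a)) (by simpa [crossAt]) k_pos,
        coord_first (by simpa) k_pos, crossAt_self, HalfEdge.outer_cross_of_not_atSeam h]
    · exact coord_crossAt_of_ne hd (fun hd ↦ h hd.2) k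
  ext b <;> exact coord_eq _

theorem exists_blockMove_crossAt {a : Fin (n * 2)} (ha : (a : ℕ) = 0) {y : GridSimplex n M}
    (seam : (y.1 (y.2 a)).AtSeam) (positive : (y.1 (y.2 a)).2 = 1) :
    ∃ t ∈ blockMoves n (2 * M), ∀ k ≠ 0, y.vertex k = t ((y.crossAt (y.2 a)).vertex k) := by
  have crossed {k : Fin (n * 2 + 1)} (hk : k ≠ 0) :
      y.coord k (y.2 a) = (y.crossAt (y.2 a)).coord k (y.2 a) + 2 * M := by
    have k_pos := Fin.pos_iff_ne_zero.2 hk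
    rw [coord_first (by simpa) k_pos, HalfEdge.outer_eq_outer_cross_add seam positive,
      coord_first (y := y.crossAt (y.2 a)) (by simpa [crossAt]) k_pos, crossAt_self]
  obtain ⟨⟨b, i⟩, hc⟩ : ∃ c, c = y.2 a := ⟨_, rfl⟩
  rw [← hc] at seam crossed ⊢
  have other (k) (d : Fin n × Fin 2) (hd : d.1 ≠ b) :
      (y.crossAt (b, i)).coord k d = y.coord k d :=
    coord_crossAt_of_ne (fun h ↦ hd (congrArg Prod.fst h)) (fun h ↦ hd (congrArg Prod.fst h.1)) k
  obtain rfl | rfl : i = 0 ∨ i = 1 := by omega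
  · refine ⟨_, ⟨b, .inr rfl⟩, fun k hk ↦ funext fun d ↦ ?_⟩
    obtain rfl | hd := eq_or_ne d b
    · rw [Function.update_self]
      refine Prod.ext (crossed hk) (coord_crossAt_of_ne ?_ ?_ k).symm <;> simp
    · rw [Function.update_of_ne hd]
      exact Prod.ext (other k _ hd).symm (other k _ hd).symm
  · refine ⟨_, ⟨b, .inl rfl⟩, fun k hk ↦ funext fun d ↦ ?_⟩
    obtain rfl | hd := eq_or_ne d b
    · rw [Function.update_self]
      refine Prod.ext ?_ (crossed hk)
      have := coord_crossAt_partner (by simp) seam k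
      simp only [vertex, glide, this, sub_sub_cancel]
    · rw [Function.update_of_ne hd]
      exact Prod.ext (other k _ hd).symm (other k _ hd).symm

theorem invariant_face_crossAt {Φ : (Fin (n * 2) → GridPoint n) → ZMod 2}
    (Φ_invariant : InvariantCochain (blockMoves n (2 * M)) Φ) {a : Fin (n * 2)} (ha : (a : ℕ) = 0)
    (y : GridSimplex n M) :
    Φ (Fin.removeNth 0 (y.crossAt (y.2 a)).vertex) = Φ (Fin.removeNth 0 y.vertex) := by
  have positive_case {z : GridSimplex n M} (seam : (z.1 (z.2 a)).AtSeam)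
      (positive : (z.1 (z.2 a)).2 = 1) :
      Φ (Fin.removeNth 0 (z.crossAt (z.2 a)).vertex) = Φ (Fin.removeNth 0 z.vertex) := by
    obtain ⟨t, ht, vertex_eq⟩ := exists_blockMove_crossAt ha seam positive
    rw [removeNth_vertex vertex_eq, Φ_invariant t ht]
  by_cases seam : (y.1 (y.2 a)).AtSeam
  · obtain positive | negative := Int.units_eq_one_or (y.1 (y.2 a)).2
    · exact positive_case seam positive
    · set z := y.crossAt (y.2 a)
      have edge : z.1 (z.2 a) = (y.1 (y.2 a)).cross := crossAt_self _ _
      have back : z.crossAt (z.2 a) = y := crossAt_crossAt _ _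
      have := positive_case (z := z) (by rwa [edge, HalfEdge.atSeam_cross])
        (by rw [edge, HalfEdge.cross, negative, neg_neg])
      rw [← this, back]
  · exact congrArg Φ (removeNth_vertex (t := id)
      fun k hk ↦ vertex_crossAt_of_not_atSeam ha seam hk)

theorem facePairing_zero (hn : 0 < n) (hT : blockMoves n (2 * M) ⊆ T) :
    FacePairing T (fun y : GridSimplex n M ↦ ω y.2) vertex 0 := by
  let first : Fin (n * 2) := ⟨0, by omega⟩
  exact ⟨fun y ↦ y.crossAt (y.2 first), fun y ↦ crossAt_crossAt _ y, fun y ↦ crossAt_ne _ y,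
    fun _ ↦ rfl, fun _ Φ_invariant ↦ invariant_face_crossAt (fun t ht ↦ Φ_invariant t (hT ht)) rfl⟩

theorem isCycleModulo_blockMoves (hn : 0 < n) :
    IsCycleModulo (blockMoves n (2 * M)) (fun _ : GridSimplex n M ↦ 1) vertex := by
  refine isCycleModulo_of_faces fun j ↦ ?_
  obtain rfl | hj := eq_or_ne j 0
  · exact facePairing_zero (ω := 1) hn subset_rfl
  obtain rfl | ⟨b, rfl⟩ := j.eq_castSucc_or_eq_last.symm
  · exact facePairing_last (ω := 1) hn
  · have hb : (b : ℕ) ≠ 0 := fun h ↦ hj (Fin.ext h)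
    exact facePairing_middle (ω := 1) (a := ⟨b - 1, by omega⟩) (Nat.sub_add_cancel (by omega))
      fun _ ↦ rfl

theorem isCycleModulo_exchangeMoves : IsCycleModulo (exchangeMoves (2 * M))
    (fun y : GridSimplex 2 M ↦ startsInBlockZero y.2) vertex := by
  have later {a b : Fin (2 * 2)} (hab : (a : ℕ) + 1 = b) (ha : a ≠ 0) :
      FacePairing (exchangeMoves (2 * M)) (fun y : GridSimplex 2 M ↦ startsInBlockZero y.2)
        vertex b.castSucc := by
    refine facePairing_middle hab fun π ↦ ?_
    have hb : b ≠ 0 := fun hb ↦ by simp [hb] at hab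
    rw [startsInBlockZero, Equiv.trans_apply, Equiv.swap_apply_of_ne_of_ne ha.symm hb.symm]
    rfl
  refine isCycleModulo_of_faces fun j ↦ ?_
  fin_cases j
  · exact facePairing_zero two_pos (Set.subset_insert _ _)
  · exact facePairing_exchange
  · exact later (a := 1) (b := 2) rfl (by decide)
  · exact later (a := 2) (b := 3) rfl (by decide)
  · exact facePairing_last two_pos

end GridSimplex

section StandardCochain

/-- The 0-cochain on the universal cover of a Klein bottle which changes by one under `shift` and
is invariant under `glide`; its coboundary represents a class whose square is nonzero. -/
def kleinCochain (N : ℤ) (p : ℤ × ℤ) : ZMod 2 :=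
  if Even (p.2 / N) then ((p.1 / N : ℤ) : ZMod 2) else (((N - p.1) / N : ℤ) : ZMod 2)

variable {N : ℤ}

theorem kleinCochain_glide (hN : 0 < N) (p : ℤ × ℤ) :
    kleinCochain N (glide N p) = kleinCochain N p := by
  simp only [kleinCochain, glide, Int.add_ediv_of_dvd_right dvd_rfl, Int.ediv_self hN.ne',
    Int.even_add_one, ite_not, sub_sub_cancel]

theorem kleinCochain_shift (hN : 0 < N) (p : ℤ × ℤ) :
    kleinCochain N (shift N p) = kleinCochain N p + 1 := by
  have reflected : (N - (p.1 + N)) / N = (N - p.1) / N - 1 := by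
    rw [← sub_sub, Int.sub_ediv_of_dvd _ dvd_rfl, Int.ediv_self hN.ne']
  simp only [kleinCochain, shift, reflected, Int.add_ediv_of_dvd_right dvd_rfl,
    Int.ediv_self hN.ne', Int.cast_add, Int.cast_sub, Int.cast_one, CharTwo.sub_eq_add, ← ite_add]

theorem kleinCochain_of_lt {v u : ℤ} (hu : 0 ≤ u) (huN : u < N) :
    kleinCochain N (v, u) = (v / N : ℤ) := by
  simp [kleinCochain, Int.ediv_eq_zero_of_lt hu huN]

theorem kleinCochain_top (hN : 0 < N) (v : ℤ) : kleinCochain N (v, N) = ((N - v) / N : ℤ) := by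
  simp [kleinCochain, Int.ediv_self hN.ne']

theorem ediv_eq_ite {v : ℤ} (hv : 0 ≤ v) (hvN : v ≤ N) (hN : 0 < N) :
    v / N = if v = N then 1 else 0 := by
  split_ifs with h
  · rw [h, Int.ediv_self hN.ne']
  · exact Int.ediv_eq_zero_of_lt hv (lt_of_le_of_ne hvN h)

theorem kleinCochain_cross_first {v v' u : ℤ} (hv : 0 ≤ v) (hvN : v < N) (hv' : 0 ≤ v')
    (hvN' : v' ≤ N) (hu : 0 ≤ u) (huN : u < N) :
    kleinCochain N (v, u) + kleinCochain N (v', u) = if v' = N then 1 else 0 := by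
  rw [kleinCochain_of_lt hu huN, kleinCochain_of_lt hu huN, Int.ediv_eq_zero_of_lt hv hvN,
    ediv_eq_ite hv' hvN' (hu.trans_lt huN)]
  push_cast
  exact zero_add _

theorem kleinCochain_cross_second_of_lt {v u u' : ℤ} (hv : 0 < v) (hvN : v < N) (hu : 0 ≤ u)
    (huN : u < N) (hu' : 0 ≤ u') (huN' : u' ≤ N) :
    kleinCochain N (v, u) + kleinCochain N (v, u') = 0 := by
  have vanishes {w : ℤ} (hw : 0 ≤ w) (hwN : w ≤ N) : kleinCochain N (v, w) = 0 := by
    obtain h | rfl := hwN.lt_or_eq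
    · rw [kleinCochain_of_lt hw h, Int.ediv_eq_zero_of_lt hv.le hvN, Int.cast_zero]
    · rw [kleinCochain_top (hv.trans hvN), Int.ediv_eq_zero_of_lt (by omega) (by omega),
        Int.cast_zero]
  rw [vanishes hu huN.le, vanishes hu' huN', add_zero]

theorem kleinCochain_cross_second_top {u u' : ℤ} (hu : 0 ≤ u) (huN : u < N) (hu' : 0 ≤ u')
    (huN' : u' ≤ N) :
    kleinCochain N (N, u) + kleinCochain N (N, u') = if u' = N then 1 else 0 := by
  have hN := hu.trans_lt huN
  rw [kleinCochain_of_lt hu huN, Int.ediv_self hN.ne']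
  split_ifs with h
  · rw [h, kleinCochain_top hN, sub_self, Int.zero_ediv, Int.cast_one, Int.cast_zero, add_zero]
  · rw [kleinCochain_of_lt hu' (lt_of_le_of_ne huN' h), Int.ediv_self hN.ne', Int.cast_one,
      CharTwo.add_self_eq_zero]

variable {n : ℕ}

/-- The sum of the cochains `kleinCochain` of the blocks in a set `s`. -/
def blockSumCochain (N : ℤ) (s : Finset (Fin n)) (p : GridPoint n) : ZMod 2 :=
  ∑ b ∈ s, kleinCochain N (p b)

theorem blockSumCochain_add (s : Finset (Fin n)) {p q : GridPoint n} {b : Fin n}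
    (h : ∀ d ≠ b, p d = q d) :
    blockSumCochain N s p + blockSumCochain N s q =
      if b ∈ s then kleinCochain N (p b) + kleinCochain N (q b) else 0 := by
  rw [blockSumCochain, blockSumCochain, ← Finset.sum_add_distrib,
    ← Finset.sum_ite_eq' s b fun d ↦ kleinCochain N (p d) + kleinCochain N (q d)]
  refine Finset.sum_congr rfl fun d _ ↦ ?_
  split_ifs with hd
  · rfl
  · rw [h d hd, CharTwo.add_self_eq_zero]

theorem blockSumCochain_update (s : Finset (Fin n)) (p : GridPoint n) (b : Fin n) (q : ℤ × ℤ) :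
    blockSumCochain N s (Function.update p b q) = blockSumCochain N s p +
      if b ∈ s then kleinCochain N (p b) + kleinCochain N q else 0 := by
  have change := blockSumCochain_add (N := N) s (p := p) (q := Function.update p b q) (b := b)
    fun d hd ↦ (Function.update_of_ne hd _ _).symm
  rw [Function.update_self] at change
  rw [← change, CharTwo.add_cancel_left]

theorem twistedAlike_blockSumCochain (hN : 0 < N) {s : Finset (Fin n)} {g : GridPoint n → ZMod 2}
    (g_glide : ∀ b p, g (Function.update p b (glide N (p b))) = g p)
    (g_shift : ∀ b p, g (Function.update p b (shift N (p b))) = g p + if b ∈ s then 1 else 0) :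
    TwistedAlike (blockMoves n N) g (blockSumCochain N s) := by
  rintro t ⟨b, rfl | rfl⟩
  · refine ⟨0, fun p ↦ by rw [g_glide, add_zero], fun p ↦ ?_⟩
    rw [blockSumCochain_update, kleinCochain_glide hN, CharTwo.add_self_eq_zero, ite_self]
  · refine ⟨if b ∈ s then 1 else 0, fun p ↦ g_shift b p, fun p ↦ ?_⟩
    rw [blockSumCochain_update, kleinCochain_shift hN, CharTwo.add_cancel_left]

theorem twistedAlike_exchange (hN : 0 < N) {g : GridPoint 2 → ZMod 2}
    (g_glide : ∀ b p, g (Function.update p b (glide N (p b))) = g p)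
    (g_shift : ∀ b p, g (Function.update p b (shift N (p b))) = g p + 1)
    (g_exchange : ∀ p, g (p ∘ Equiv.swap 0 1) = g p) :
    TwistedAlike (exchangeMoves N) g (blockSumCochain N Finset.univ) := by
  rintro t (rfl | ht)
  · refine ⟨0, fun p ↦ by rw [g_exchange, add_zero], fun p ↦ ?_⟩
    rw [add_zero]
    exact Equiv.sum_comp (Equiv.swap 0 1) fun b ↦ kleinCochain N (p b)
  · exact twistedAlike_blockSumCochain hN g_glide (by simpa using g_shift) t ht

end StandardCochain

section Evaluation

variable {n M : ℕ}

/-- The paths that cross both coordinates of each block `b`, the first coordinate first, at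
positions `i` with `b ∈ C i`. -/
def Admissible (C : Fin (n * 2) → Finset (Fin n)) (π : Fin (n * 2) ≃ Fin n × Fin 2) : Prop :=
  ∀ b, (b ∈ C (π.symm (b, 0)) ∧ b ∈ C (π.symm (b, 1))) ∧ π.symm (b, 0) < π.symm (b, 1)

instance (C : Fin (n * 2) → Finset (Fin n)) : DecidablePred (Admissible C) :=
  fun _ ↦ Fintype.decidableForallFintype

namespace GridSimplex

theorem coord_castSucc_eq_succ {y : GridSimplex n M} {i : Fin (n * 2)} {d : Fin n × Fin 2}
    (hd : d ≠ y.2 i) : y.coord i.castSucc d = y.coord i.succ d := by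
  have : (y.2.symm d : ℕ) ≠ i := fun h ↦ hd (y.2.symm_apply_eq.1 (Fin.ext h))
  simp only [coord, Fin.val_castSucc, Fin.val_succ]
  congr 1
  rw [eq_iff_iff]
  omega

theorem blockSumCochain_crossing (N : ℤ) (s : Finset (Fin n)) (y : GridSimplex n M)
    (i : Fin (n * 2)) {c : Fin n × Fin 2} (hc : y.2.symm c = i) :
    blockSumCochain N s (y.vertex i.castSucc) + blockSumCochain N s (y.vertex i.succ) =
      if c.1 ∈ s then kleinCochain N (y.vertex i.castSucc c.1) +
        kleinCochain N (y.vertex i.succ c.1) else 0 := by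
  obtain rfl : c = y.2 i := y.2.symm_apply_eq.1 hc
  refine blockSumCochain_add s fun d hd ↦ ?_
  have ne (a : Fin 2) : (d, a) ≠ y.2 i := fun h ↦ hd (h ▸ rfl)
  exact Prod.ext (coord_castSucc_eq_succ (ne 0)) (coord_castSucc_eq_succ (ne 1))

variable [NeZero M]

theorem kleinCochain_crossings (y : GridSimplex n M) (b : Fin n) :
    (kleinCochain (2 * M) (y.vertex (y.2.symm (b, 0)).castSucc b) +
        kleinCochain (2 * M) (y.vertex (y.2.symm (b, 0)).succ b)) *
      (kleinCochain (2 * M) (y.vertex (y.2.symm (b, 1)).castSucc b) +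
        kleinCochain (2 * M) (y.vertex (y.2.symm (b, 1)).succ b)) =
      if y.2.symm (b, 0) < y.2.symm (b, 1) ∧ ∀ a, y.1 (b, a) = (-1, 1) then 1 else 0 := by
  have positions_ne : y.2.symm (b, 0) ≠ y.2.symm (b, 1) := by simp
  simp only [vertex, coord, Fin.val_castSucc, Fin.val_succ, lt_irrefl, if_false, lt_add_one,
    if_true, Fin.forall_fin_two, ← HalfEdge.outer_eq_iff]
  generalize y.1 (b, 0) = e, y.1 (b, 1) = f
  obtain first | second := positions_ne.lt_or_gt
  · have : (y.2.symm (b, 0) : ℕ) < y.2.symm (b, 1) := first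
    rw [if_neg (by omega), if_neg (by omega), if_pos (by omega), if_pos (by omega),
      kleinCochain_cross_first e.inner_pos.le e.inner_lt e.outer_nonneg e.outer_le f.inner_pos.le
        f.inner_lt, ite_mul, zero_mul, one_mul]
    by_cases he : e.outer = 2 * M
    · rw [if_pos he, he, kleinCochain_cross_second_top f.inner_pos.le f.inner_lt f.outer_nonneg
        f.outer_le]
      simp only [first, true_and]
    · simp only [he, if_false, false_and, and_false]
  · have : (y.2.symm (b, 1) : ℕ) < y.2.symm (b, 0) := second
    rw [if_neg (c := (y.2.symm (b, 0) : ℕ) < _) (by omega),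
      if_neg (c := (y.2.symm (b, 0) : ℕ) < _) (by omega),
      kleinCochain_cross_second_of_lt e.inner_pos e.inner_lt f.inner_pos.le f.inner_lt
        f.outer_nonneg f.outer_le, mul_zero, if_neg fun h ↦ h.1.not_gt second]

theorem cupProd_blockSumCochain (C : Fin (n * 2) → Finset (Fin n)) (y : GridSimplex n M) :
    cupProd (fun i ↦ blockSumCochain (2 * M) (C i)) y.vertex =
      if Admissible C y.2 ∧ ∀ c, y.1 c = (-1, 1) then 1 else 0 := by
  rw [cupProd, ← Equiv.prod_comp y.2.symm, Fintype.prod_prod_type]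
  simp only [blockSumCochain_crossing _ _ y _ (c := (_, _)) rfl, Fin.prod_univ_two,
    ite_zero_mul_ite_zero, kleinCochain_crossings, ← ite_and, Finset.prod_boole,
    Finset.mem_univ, true_imp_iff]
  simp only [Admissible, Prod.forall, ← forall_and, and_assoc]

theorem exists_cupProd_factors_ne {T : Set (GridPoint n → GridPoint n)}
    {ω : (Fin (n * 2) ≃ Fin n × Fin 2) → ZMod 2}
    (cycle : IsCycleModulo T (fun y : GridSimplex n M ↦ ω y.2) vertex)
    {C : Fin (n * 2) → Finset (Fin n)} {g : Fin (n * 2) → GridPoint n → ZMod 2}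
    (twisted : ∀ i, TwistedAlike T (g i) (blockSumCochain (2 * M) (C i)))
    (odd : (∑ π, if Admissible C π then ω π else 0) = 1) :
    ∃ y : GridSimplex n M, ∀ i, g i (y.vertex i.castSucc) ≠ g i (y.vertex i.succ) := by
  have total : ∑ y : GridSimplex n M, ω y.2 * cupProd g y.vertex = 1 := by
    rw [cycle.sum_cupProd_eq twisted, ← odd, Fintype.sum_prod_type_right]
    refine Finset.sum_congr rfl fun π _ ↦ ?_
    simp only [cupProd_blockSumCochain, ← funext_iff (g := fun _ ↦ ((-1, 1) : HalfEdge M)),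
      ite_and, mul_ite, mul_one, mul_zero]
    rw [Finset.sum_ite_irrel, Finset.sum_ite_eq' _ _ fun _ ↦ ω π, Finset.sum_const_zero,
      if_pos (Finset.mem_univ _)]
  obtain ⟨y, -, hy⟩ := Finset.exists_ne_zero_of_sum_ne_zero (total.trans_ne one_ne_zero)
  refine ⟨y, fun i h ↦ ?_⟩
  have factor := Finset.prod_ne_zero_iff.1 (right_ne_zero_of_mul hy) i (Finset.mem_univ i)
  exact factor (CharTwo.add_eq_zero.2 h)

end GridSimplex

end Evaluation

section Parity

/-- Three of the six interleavings of two ordered pairs of steps begin in block `0`. -/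
theorem sum_admissible_two : (∑ π, if Admissible (fun _ ↦ (Finset.univ : Finset (Fin 2))) π
    then GridSimplex.startsInBlockZero π else 0) = 1 := by
  decide +kernel

variable {n : ℕ} {C : Fin (n * 2) → Finset (Fin n)} {π : Fin (n * 2) ≃ Fin n × Fin 2}

theorem eq_position_of_block_eq {i : Fin (n * 2)} {b : Fin n} (h : (π i).1 = b) :
    i = π.symm (b, 0) ∨ i = π.symm (b, 1) := by
  simp only [Equiv.eq_symm_apply, Prod.ext_iff, h, true_and]
  omega

theorem Admissible.swap {i j : Fin (n * 2)} (hij : (i : ℕ) + 1 = j) (hC : C i = C j)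
    (blocks_ne : (π i).1 ≠ (π j).1) (h : Admissible C π) :
    Admissible C ((Equiv.swap i j).trans π) := by
  have C_swap (k) : C (Equiv.swap i j k) = C k := by
    rw [Equiv.swap_apply_def]
    split_ifs with h h' <;> simp only [*]
  intro b
  have order_swap {k l : Fin (n * 2)} (hkl : k < l) (h : ¬(k = i ∧ l = j)) :
      Equiv.swap i j k < Equiv.swap i j l := by
    simp only [Equiv.swap_apply_def]
    split_ifs <;> omega
  refine ⟨by simpa only [Equiv.symm_trans_apply, Equiv.symm_swap, C_swap] using (h b).1, ?_⟩
  refine order_swap (h b).2 fun ⟨hi, hj⟩ ↦ blocks_ne ?_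
  rw [← hi, ← hj, Equiv.apply_symm_apply, Equiv.apply_symm_apply]

/-- Different blocks use the positions `i` and `j`, so exchanging these pairs off the paths. -/
theorem sum_admissible_eq_zero_of_swap {i j k : Fin (n * 2)} (hij : (i : ℕ) + 1 = j)
    (hC : C i = C j) (hki : k ≠ i) (hkj : k ≠ j) (b : Fin n) (a : Fin 2)
    (q : (Fin (n * 2) ≃ Fin n × Fin 2) → Prop) [DecidablePred q]
    (q_swap : ∀ π, q π → q ((Equiv.swap i j).trans π))
    (at_swap : ∀ π, Admissible C π → π.symm (b, a) = k → (π i).1 = b ∨ (π j).1 = b) :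
    (∑ π, if Admissible C π ∧ q π ∧ π.symm (b, a) = k then (1 : ZMod 2) else 0) = 0 := by
  rw [← Finset.sum_filter]
  have blocks_ne (π) (h : Admissible C π) (hk : π.symm (b, a) = k) : (π i).1 ≠ (π j).1 := by
    intro blocks_eq
    have block_eq := at_swap π h hk
    have hi := eq_position_of_block_eq (block_eq.elim id blocks_eq.trans)
    have hj := eq_position_of_block_eq (block_eq.elim blocks_eq.symm.trans id)
    obtain rfl | rfl : a = 0 ∨ a = 1 := by omega
    all_goals omega
  refine Finset.sum_involution (fun π _ ↦ (Equiv.swap i j).trans π)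
    (fun _ _ ↦ CharTwo.add_self_eq_zero 1) (fun π hπ _ fixed ↦ ?_) (fun π hπ ↦ ?_)
    fun π _ ↦ by rw [← Equiv.trans_assoc, Equiv.swap_swap, Equiv.refl_trans]
  all_goals
    obtain ⟨h, hq, hk⟩ := Finset.mem_filter_univ π |>.1 hπ
  · refine blocks_ne π h hk ?_
    conv_lhs => rw [← fixed, Equiv.trans_apply, Equiv.swap_apply_left]
  · rw [Finset.mem_filter_univ, Equiv.symm_trans_apply, hk, Equiv.symm_swap,
      Equiv.swap_apply_of_ne_of_ne hki hkj]
    exact ⟨h.swap hij hC (blocks_ne π h hk), q_swap π hq, rfl⟩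

variable (hn : 3 ≤ n)

/-- The block that is paired with block `1` at position `i`: block `0` at the positions below `3`,
block `2` at the positions from `3` to `5`, and block `b ≥ 3` at the positions `2b` and `2b + 1`. -/
def hubPartner (i : Fin (n * 2)) : Fin n :=
  ⟨if (i : ℕ) < 3 then 0 else if (i : ℕ) < 6 then 2 else (i : ℕ) / 2,
    by have := i.isLt; split_ifs <;> omega⟩

/-- The pair of blocks used at position `i`; every pair contains block `1`. The partners are chosen
such that exchanges of adjacent positions pair off all admissible paths except one. -/
def hubPair (i : Fin (n * 2)) : Finset (Fin n) := {⟨1, by omega⟩, hubPartner hn i}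

theorem hubPartner_ne (i : Fin (n * 2)) : ⟨1, by omega⟩ ≠ hubPartner hn i := by
  simp only [hubPartner, ne_eq, Fin.mk.injEq]
  grind

variable {hn}

theorem mem_hubPair {i : Fin (n * 2)} {b : Fin n} : b ∈ hubPair hn i ↔
    (b : ℕ) = 1 ∨ (b : ℕ) = if (i : ℕ) < 3 then 0 else if (i : ℕ) < 6 then 2 else (i : ℕ) / 2 := by
  simp only [hubPair, hubPartner, Finset.mem_insert, Finset.mem_singleton, Fin.ext_iff]

theorem hubPair_congr {i j : Fin (n * 2)} (h : (i : ℕ) < 3 ↔ (j : ℕ) < 3)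
    (h' : (i : ℕ) < 6 ∧ (j : ℕ) < 6) : hubPair hn i = hubPair hn j := by
  ext b
  simp only [mem_hubPair, h, h'.1, h'.2, if_true]

theorem admissible_hubPair_low (h : Admissible (hubPair hn) π) {b : Fin n} (hb : (b : ℕ) = 0) :
    (π.symm (b, 0) : ℕ) < π.symm (b, 1) ∧ (π.symm (b, 1) : ℕ) < 3 := by
  obtain ⟨⟨-, h1⟩, order⟩ := h b
  rw [mem_hubPair] at h1
  refine ⟨order, ?_⟩
  grind

theorem admissible_hubPair_middle (h : Admissible (hubPair hn) π) {b : Fin n} (hb : (b : ℕ) = 2) :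
    3 ≤ (π.symm (b, 0) : ℕ) ∧ (π.symm (b, 0) : ℕ) < π.symm (b, 1) ∧ (π.symm (b, 1) : ℕ) < 6 := by
  obtain ⟨⟨h0, h1⟩, order⟩ := h b
  rw [mem_hubPair] at h0 h1
  have : (π.symm (b, 0) : ℕ) < π.symm (b, 1) := order
  grind

theorem admissible_hubPair_high (h : Admissible (hubPair hn) π) {b : Fin n} (hb : 3 ≤ (b : ℕ)) :
    (π.symm (b, 0) : ℕ) = b * 2 ∧ (π.symm (b, 1) : ℕ) = b * 2 + 1 := by
  obtain ⟨⟨h0, h1⟩, order⟩ := h b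
  rw [mem_hubPair] at h0 h1
  have : (π.symm (b, 0) : ℕ) < π.symm (b, 1) := order
  split_ifs at h0 h1 <;> omega

theorem admissible_hubPair_finProdFinEquiv : Admissible (hubPair hn) finProdFinEquiv.symm := by
  intro b
  simp only [mem_hubPair, Equiv.symm_symm, Fin.lt_def, finProdFinEquiv_apply_val, Fin.val_zero,
    Fin.val_one]
  grind

theorem position_hub_div_two (off_hub : ∀ b : Fin n, (b : ℕ) ≠ 1 → ∀ a,
      π.symm (b, a) = finProdFinEquiv (b, a)) {b : Fin n} (hb : (b : ℕ) = 1) (a : Fin 2) :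
    (π.symm (b, a) : ℕ) / 2 = 1 := by
  by_contra off
  have := off_hub (finProdFinEquiv.symm (π.symm (b, a))).1 off
    (finProdFinEquiv.symm (π.symm (b, a))).2
  rw [Prod.mk.eta, Equiv.apply_symm_apply, π.symm.apply_eq_iff_eq] at this
  exact off (congrArg (fun c ↦ (c.1 : ℕ)) this |>.trans hb)

theorem eq_finProdFinEquiv_of_admissible (h : Admissible (hubPair hn) π)
    (low : ∀ b : Fin n, (b : ℕ) = 0 → π.symm (b, 1) ≠ ⟨2, by omega⟩)
    (middle : ∀ b : Fin n, (b : ℕ) = 2 → π.symm (b, 0) ≠ ⟨3, by omega⟩) :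
    π = finProdFinEquiv.symm := by
  have off_hub (b : Fin n) (hb : (b : ℕ) ≠ 1) (a : Fin 2) :
      π.symm (b, a) = finProdFinEquiv (b, a) := by
    have := admissible_hubPair_low h (b := b)
    have := admissible_hubPair_middle h (b := b)
    have := admissible_hubPair_high h (b := b)
    simp only [ne_eq, Fin.ext_iff] at low middle
    have := low b
    have := middle b
    rw [Fin.ext_iff, finProdFinEquiv_apply_val]
    obtain rfl | rfl : a = 0 ∨ a = 1 := by omega
    all_goals simp only [Fin.val_zero, Fin.val_one]; omega
  refine Equiv.symm_bijective.injective (Equiv.ext fun ⟨b, a⟩ ↦ ?_)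
  obtain hb | hb := ne_or_eq (b : ℕ) 1
  · exact off_hub b hb a
  · have order := Fin.lt_def.1 (h b).2
    have := position_hub_div_two off_hub hb 0
    have := position_hub_div_two off_hub hb 1
    rw [Equiv.symm_symm, Fin.ext_iff, finProdFinEquiv_apply_val]
    obtain rfl | rfl : a = 0 ∨ a = 1 := by omega
    all_goals simp only [Fin.val_zero, Fin.val_one]; omega

theorem sum_admissible_low :
    (∑ π, if Admissible (hubPair hn) π ∧ π.symm (⟨0, by omega⟩, 1) = ⟨2, by omega⟩
      then (1 : ZMod 2) else 0) = 0 := by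
  have sum_eq := sum_admissible_eq_zero_of_swap (C := hubPair hn) (i := ⟨0, by omega⟩)
    (j := ⟨1, by omega⟩) (k := ⟨2, by omega⟩) rfl (hubPair_congr (by simp) (by simp))
    (by simp) (by simp) ⟨0, by omega⟩ 1 (fun _ ↦ True) (fun _ _ ↦ trivial) fun π h hk ↦ ?_
  · simpa only [true_and] using sum_eq
  · have := admissible_hubPair_low h (b := ⟨0, by omega⟩) rfl
    rw [hk] at this
    have position : π.symm (⟨0, by omega⟩, 0) = ⟨0, by omega⟩ ∨
        π.symm (⟨0, by omega⟩, 0) = ⟨1, by omega⟩ := by simp only [Fin.ext_iff]; omega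
    simp only [Equiv.symm_apply_eq] at position
    exact position.imp (fun h ↦ by rw [← h]) fun h ↦ by rw [← h]

theorem sum_admissible_middle :
    (∑ π, if Admissible (hubPair hn) π ∧ π.symm (⟨0, by omega⟩, 1) ≠ ⟨2, by omega⟩ ∧
      π.symm (⟨2, by omega⟩, 0) = ⟨3, by omega⟩ then (1 : ZMod 2) else 0) = 0 := by
  refine sum_admissible_eq_zero_of_swap (i := ⟨4, by omega⟩) (j := ⟨5, by omega⟩) rfl
    (hubPair_congr (by simp) (by simp)) (by simp) (by simp) _ 0 _ (fun π hq ↦ ?_) fun π h hk ↦ ?_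
  · rwa [Equiv.symm_trans_apply, Equiv.symm_swap, ne_eq, Equiv.swap_apply_eq_iff,
      Equiv.swap_apply_of_ne_of_ne (by simp) (by simp)]
  · have := admissible_hubPair_middle h (b := ⟨2, by omega⟩) rfl
    rw [hk] at this
    have position : π.symm (⟨2, by omega⟩, 1) = ⟨4, by omega⟩ ∨
        π.symm (⟨2, by omega⟩, 1) = ⟨5, by omega⟩ := by simp only [Fin.ext_iff]; omega
    simp only [Equiv.symm_apply_eq] at position
    exact position.imp (fun h ↦ by rw [← h]) fun h ↦ by rw [← h]

theorem sum_admissible_hubPair :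
    (∑ π, if Admissible (hubPair hn) π then (1 : ZMod 2) else 0) = 1 := by
  let low (π : Fin (n * 2) ≃ Fin n × Fin 2) := π.symm (⟨0, by omega⟩, 1) = ⟨2, by omega⟩
  let middle (π : Fin (n * 2) ≃ Fin n × Fin 2) := π.symm (⟨2, by omega⟩, 0) = ⟨3, by omega⟩
  have remaining (π) : Admissible (hubPair hn) π ∧ ¬low π ∧ ¬middle π ↔
      π = finProdFinEquiv.symm := by
    refine ⟨fun ⟨h, hlow, hmiddle⟩ ↦ eq_finProdFinEquiv_of_admissible h ?_ ?_, ?_⟩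
    · rintro b hb
      rwa [show b = ⟨0, by omega⟩ from Fin.ext hb]
    · rintro b hb
      rwa [show b = ⟨2, by omega⟩ from Fin.ext hb]
    · rintro rfl
      refine ⟨admissible_hubPair_finProdFinEquiv, ?_, ?_⟩ <;>
        simp [low, middle, Fin.ext_iff]
  have split_sum (π) : (if Admissible (hubPair hn) π then (1 : ZMod 2) else 0) =
      (if Admissible (hubPair hn) π ∧ low π then 1 else 0) +
        (if Admissible (hubPair hn) π ∧ ¬low π ∧ middle π then 1 else 0) +
        if π = finProdFinEquiv.symm then 1 else 0 := by
    simp only [← remaining]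
    by_cases low π <;> by_cases middle π <;> simp [*]
  simp only [split_sum, Finset.sum_add_distrib]
  rw [sum_admissible_low, sum_admissible_middle, Finset.sum_ite_eq' Finset.univ,
    if_pos (Finset.mem_univ _), add_zero, zero_add]

end Parity

section DoubleCovering

namespace RP

variable {m : ℕ}

/-- The double covering of projective space by the sphere. -/
def mk (x : Sph m) : RP m := Quotient.mk (antipodalSetoid m) x

/-- A set-theoretic section of the double covering. -/
def rep (x : RP m) : Sph m := Quotient.out x

theorem mk_rep (x : RP m) : mk x.rep = x := Quotient.out_eq x

theorem mk_eq_mk_iff {x y : Sph m} : mk x = mk y ↔ x = y ∨ x = -y := by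
  simp only [Subtype.ext_iff]
  exact Quotient.eq (r := antipodalSetoid m)

theorem mk_neg (x : Sph m) : mk (-x) = mk x := mk_eq_mk_iff.2 (.inr rfl)

theorem isCoveringMap_mk : IsCoveringMap (mk : Sph m → RP m) := by
  have unit_eq {r : ℝ} (hr : r ∈ Metric.sphere (0 : ℝ) 1) : r = 1 ∨ r = -1 :=
    eq_or_eq_neg_of_abs_eq (mem_sphere_zero_iff_norm.1 hr)
  have : Finite (Metric.sphere (0 : ℝ) 1) :=
    Set.Finite.subset (Set.toFinite {1, -1}) fun _ ↦ unit_eq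
  have : IsCancelSMul (Metric.sphere (0 : ℝ) 1) (Sph m) := by
    refine (isCancelSMul_iff_eq_one_of_smul_eq (α := Metric.sphere (0 : ℝ) 1)).2
      fun ⟨r, hr⟩ x hx ↦ ?_
    obtain rfl | rfl := unit_eq hr
    · rfl
    · exact absurd (hx.symm.trans (Subtype.ext (neg_one_smul ℝ _)))
        (ne_neg_of_mem_unit_sphere ℝ x)
  refine (isQuotientMap_quotient_mk'.isQuotientCoveringMap_of_properlyDiscontinuousSMul
    (G := Metric.sphere (0 : ℝ) 1) fun {x y} ↦ ?_).isCoveringMap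
  rw [MulAction.mem_orbit_iff]
  refine mk_eq_mk_iff.trans ⟨?_, ?_⟩
  · rintro (rfl | rfl)
    exacts [⟨1, one_smul _ _⟩, ⟨-1, Subtype.ext (neg_one_smul ℝ _)⟩]
  · rintro ⟨⟨r, hr⟩, rfl⟩
    obtain rfl | rfl := unit_eq hr
    exacts [.inl (Subtype.ext (one_smul ℝ _)), .inr (Subtype.ext (neg_one_smul ℝ _))]

theorem continuous_mk : Continuous (mk : Sph m → RP m) := isCoveringMap_mk.continuous

open Classical in
/-- The difference of two points of a fibre of the double covering, as a torsor over `ZMod 2`. -/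
def fibreSign (x y : Sph m) : ZMod 2 := if x = y then 0 else 1

theorem fibreSign_neg_left {x y : Sph m} (h : mk x = mk y) :
    fibreSign (-x) y = fibreSign x y + 1 := by
  have ne := ne_neg_of_mem_unit_sphere ℝ y
  obtain rfl | rfl := mk_eq_mk_iff.1 h
  · rw [fibreSign, fibreSign, if_neg ne.symm, if_pos rfl, zero_add]
  · rw [fibreSign, fibreSign, neg_neg, if_pos rfl, if_neg ne.symm, CharTwo.add_self_eq_zero]

theorem fibreSign_add_fibreSign {x y z : Sph m} (hx : mk x = mk z) (hy : mk y = mk z) :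
    fibreSign x z + fibreSign y z = fibreSign x y := by
  obtain rfl | rfl := mk_eq_mk_iff.1 hx
  · obtain rfl | rfl := mk_eq_mk_iff.1 hy
    · simp [fibreSign]
    · simp [fibreSign, eq_comm]
  · obtain rfl | rfl := mk_eq_mk_iff.1 hy
    · simp [fibreSign]
    · rw [CharTwo.add_self_eq_zero, fibreSign, if_pos rfl]

variable {V : Type*} [TopologicalSpace V]

theorem continuous_fibreSign {f g : V → Sph m} (hf : Continuous f) (hg : Continuous g)
    (hfg : ∀ v, mk (f v) = mk (g v)) : Continuous fun v ↦ fibreSign (f v) (g v) := by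
  have compl_eq : {v | f v = g v}ᶜ = {v | f v = -g v} := by
    ext v
    have ne := ne_neg_of_mem_unit_sphere ℝ (g v)
    obtain h | h := mk_eq_mk_iff.1 (hfg v) <;> simp [h, ne, ne.symm]
  have isClopen : IsClopen {v | f v = g v} :=
    ⟨isClosed_eq hf hg, isClosed_compl_iff.1 (compl_eq ▸ isClosed_eq hf hg.neg)⟩
  exact continuous_const.if (fun v hv ↦ absurd hv (by simp [isClopen.frontier_eq]))
    continuous_const

/-- The endpoint of the lift of a path that starts at the chosen representative. -/
def endLift (γ : C(I, RP m)) : Sph m :=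
  isCoveringMap_mk.liftPath γ (γ 0).rep (mk_rep _).symm 1

theorem mk_endLift (γ : C(I, RP m)) : mk (endLift γ) = γ 1 :=
  congrFun (isCoveringMap_mk.liftPath_lifts γ _ (mk_rep _).symm) 1

theorem fibreSign_endLift {γ : C(I, RP m)} {Γ : C(I, Sph m)} (lifts : ∀ t, mk (Γ t) = γ t) :
    fibreSign (Γ 1) (endLift γ) = fibreSign (Γ 0) (γ 0).rep := by
  have endLift_eq {Δ : C(I, Sph m)} (hΔ : ∀ t, mk (Δ t) = γ t) (h0 : Δ 0 = (γ 0).rep) :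
      endLift γ = Δ 1 := by
    rw [(isCoveringMap_mk.eq_liftPath_iff' (mk_rep _).symm).2 ⟨funext hΔ, h0⟩]
    rfl
  obtain h0 | h0 := mk_eq_mk_iff.1 ((lifts 0).trans (mk_rep (γ 0)).symm)
  · rw [endLift_eq lifts h0, h0, fibreSign, fibreSign, if_pos rfl, if_pos rfl]
  · have := endLift_eq (Δ := ⟨fun t ↦ -Γ t, Γ.continuous.neg⟩)
      (fun t ↦ (mk_neg _).trans (lifts t)) (neg_eq_iff_eq_neg.2 h0)
    rw [this, ← neg_eq_iff_eq_neg.2 h0]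
    simp only [ContinuousMap.coe_mk, fibreSign, ne_neg_of_mem_unit_sphere ℝ, if_false]

/-- Only the common initial point of the two paths matters, so the choice of its representative
cancels. -/
theorem continuous_fibreSign_endLift_add {α β : C(V, C(I, RP m))} {f g : C(V, Sph m)}
    (start : ∀ v, α v 0 = β v 0) (hf : ∀ v, α v 1 = mk (f v)) (hg : ∀ v, β v 1 = mk (g v)) :
    Continuous fun v ↦ fibreSign (f v) (endLift (α v)) + fibreSign (g v) (endLift (β v)) := by
  let H : C(I × V, RP m) := ⟨fun q ↦ α q.2 (σ q.1), by fun_prop⟩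
  let L := isCoveringMap_mk.liftHomotopy H f fun v ↦ by simp [H, hf]
  have L_lifts (t v) : mk (L (t, v)) = α v (σ t) :=
    congrFun (isCoveringMap_mk.liftHomotopy_lifts H f _) (t, v)
  have L_zero (v) : L (0, v) = f v := isCoveringMap_mk.liftHomotopy_zero H f _ v
  let H' : C(I × V, RP m) := ⟨fun q ↦ β q.2 q.1, by fun_prop⟩
  let z : C(V, Sph m) := ⟨fun v ↦ L (1, v), by fun_prop⟩
  let L' := isCoveringMap_mk.liftHomotopy H' z fun v ↦ by simp [H', z, L_lifts, start]
  have L'_lifts (t v) : mk (L' (t, v)) = β v t :=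
    congrFun (isCoveringMap_mk.liftHomotopy_lifts H' z _) (t, v)
  have L'_zero (v) : L' (0, v) = L (1, v) := isCoveringMap_mk.liftHomotopy_zero H' z _ v
  have transfer (v) : fibreSign (f v) (endLift (α v)) = fibreSign (L' (1, v)) (endLift (β v)) := by
    have first := fibreSign_endLift (γ := α v) (Γ := ⟨fun t ↦ L (σ t, v), by fun_prop⟩)
      fun t ↦ by simp [L_lifts]
    have second := fibreSign_endLift (γ := β v) (Γ := ⟨fun t ↦ L' (t, v), by fun_prop⟩)
      fun t ↦ L'_lifts t v
    simp only [ContinuousMap.coe_mk, unitInterval.symm_one, unitInterval.symm_zero, L_zero,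
      L'_zero, ← start] at first second
    rw [first, second]
  have signs_eq (v) : fibreSign (f v) (endLift (α v)) + fibreSign (g v) (endLift (β v)) =
      fibreSign (L' (1, v)) (g v) := by
    rw [transfer, fibreSign_add_fibreSign]
    exacts [(L'_lifts 1 v).trans (mk_endLift _).symm, (hg v).symm.trans (mk_endLift _).symm]
  simp only [signs_eq]
  exact continuous_fibreSign (by fun_prop) (by fun_prop) fun v ↦ (L'_lifts 1 v).trans (hg v)

end RP

end DoubleCovering

section PlannerSigns

namespace RP

variable {m n : ℕ} {U : Set (Fin n → RP m)}

open Classical in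
/-- The lifts of the entries of a tuple determined by the paths of a motion planner on `U`; outside
of `U` these are arbitrary lifts. -/
def plannerLift (s : C(U, Fin n → C(I, RP m))) (x : Fin n → RP m) (c : Fin n) : Sph m :=
  if h : x ∈ U then endLift (s ⟨x, h⟩ c) else (x c).rep

theorem mk_plannerLift {s : C(U, Fin n → C(I, RP m))}
    (target : ∀ x : U, ∀ c, s x c 1 = (x : Fin n → RP m) c) (x : Fin n → RP m) (c : Fin n) :
    mk (plannerLift s x c) = x c := by
  unfold plannerLift
  split_ifs with h
  · rw [mk_endLift, target]
  · exact mk_rep _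

theorem plannerLift_comp_perm {s : C(U, Fin n → C(I, RP m))}
    (invariant : ∀ ρ : Equiv.Perm (Fin n), ∀ x ∈ U, permTuple ρ x ∈ U)
    (equivariant : ∀ x : U, ∀ ρ : Equiv.Perm (Fin n), ∀ hx : permTuple ρ (x : Fin n → RP m) ∈ U,
      s ⟨permTuple ρ x, hx⟩ = permTuple ρ (s x)) (ρ : Equiv.Perm (Fin n)) (x : Fin n → RP m) :
    plannerLift s (x ∘ ρ) = plannerLift s x ∘ ρ := by
  funext c
  by_cases h : x ∈ U
  · have h' : x ∘ ρ ∈ U := invariant ρ x h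
    rw [Function.comp_apply, plannerLift, dif_pos h', plannerLift, dif_pos h]
    exact congrArg endLift (congrFun (equivariant ⟨x, h⟩ ρ h') c)
  · have back : permTuple ρ.symm (x ∘ ρ) = x := funext fun c ↦ congrArg x (ρ.apply_symm_apply c)
    have h' : x ∘ ρ ∉ U := fun h' ↦ h (back ▸ invariant ρ.symm _ h')
    rw [Function.comp_apply, plannerLift, dif_neg h', plannerLift, dif_neg h, Function.comp_apply]

/-- The sign, summed over the entries in `C`, by which a motion planner on `U` compares a tuple of
points of the sphere with the lifts of its image. -/
def plannerSign (C : Finset (Fin n)) (s : C(U, Fin n → C(I, RP m))) (y : Fin n → Sph m) : ZMod 2 :=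
  ∑ c ∈ C, fibreSign (y c) (plannerLift s (mk ∘ y) c)

theorem plannerSign_update_neg {s : C(U, Fin n → C(I, RP m))}
    (target : ∀ x : U, ∀ c, s x c 1 = (x : Fin n → RP m) c) (C : Finset (Fin n))
    (y : Fin n → Sph m) (b : Fin n) :
    plannerSign C s (Function.update y b (-y b)) = plannerSign C s y + if b ∈ C then 1 else 0 := by
  have image : mk ∘ Function.update y b (-y b) = mk ∘ y := by
    rw [Function.comp_update, mk_neg, ← Function.comp_apply (f := mk), Function.update_eq_self]
  rw [plannerSign, plannerSign, image, ← Finset.sum_ite_eq' C b fun _ ↦ (1 : ZMod 2),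
    ← Finset.sum_add_distrib]
  refine Finset.sum_congr rfl fun c _ ↦ ?_
  obtain rfl | hc := eq_or_ne c b
  · rw [Function.update_self, if_pos rfl,
      fibreSign_neg_left (mk_plannerLift target (mk ∘ y) c).symm]
  · rw [Function.update_of_ne hc, if_neg hc, add_zero]

theorem plannerSign_univ_comp_perm {s : C(U, Fin n → C(I, RP m))}
    (invariant : ∀ ρ : Equiv.Perm (Fin n), ∀ x ∈ U, permTuple ρ x ∈ U)
    (equivariant : ∀ x : U, ∀ ρ : Equiv.Perm (Fin n), ∀ hx : permTuple ρ (x : Fin n → RP m) ∈ U,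
      s ⟨permTuple ρ x, hx⟩ = permTuple ρ (s x)) (ρ : Equiv.Perm (Fin n)) (y : Fin n → Sph m) :
    plannerSign Finset.univ s (y ∘ ρ) = plannerSign Finset.univ s y := by
  rw [plannerSign, ← Function.comp_assoc, plannerLift_comp_perm invariant equivariant]
  exact Equiv.sum_comp ρ fun c ↦ fibreSign (y c) (plannerLift s (mk ∘ y) c)

theorem continuousOn_plannerSign {s : C(U, Fin n → C(I, RP m))}
    (start : ∀ x : U, ∀ c d, s x c 0 = s x d 0)
    (target : ∀ x : U, ∀ c, s x c 1 = (x : Fin n → RP m) c) {C : Finset (Fin n)}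
    (card : C.card = 2) : ContinuousOn (plannerSign C s) {y | mk ∘ y ∈ U} := by
  obtain ⟨a, b, hab, rfl⟩ := Finset.card_eq_two.1 card
  let V : Set (Fin n → Sph m) := {y | mk ∘ y ∈ U}
  have continuous_entry (c : Fin n) : Continuous fun y : V ↦ y.1 c :=
    (continuous_apply c).comp continuous_subtype_val
  have continuous_image : Continuous fun y : V ↦ (⟨mk ∘ y.1, y.2⟩ : U) := by
    refine Continuous.subtype_mk (continuous_pi fun c ↦ ?_) _
    exact continuous_mk.comp (continuous_entry c)
  let path (c : Fin n) : C(V, C(I, RP m)) :=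
    ⟨fun y ↦ s ⟨mk ∘ y.1, y.2⟩ c, (continuous_apply c).comp (s.continuous.comp continuous_image)⟩
  let entry (c : Fin n) : C(V, Sph m) := ⟨_, continuous_entry c⟩
  rw [continuousOn_iff_continuous_domRestrict]
  convert continuous_fibreSign_endLift_add (α := path a) (β := path b) (f := entry a)
    (g := entry b) (fun y ↦ start _ a b) (fun y ↦ target _ a) (fun y ↦ target _ b) with y
  have hy : mk ∘ (y : Fin n → Sph m) ∈ U := y.2
  rw [Set.domRestrict_apply, plannerSign, Finset.sum_pair hab, plannerLift, dif_pos hy,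
    plannerLift, dif_pos hy]
  rfl

end RP

end PlannerSigns

section GridToSphere

open Real

/-- A parametrization of the sphere. As a map to the projective plane it factors through a Klein
bottle, which it maps to the plane with odd degree. -/
def sphereParam (q : ℝ × ℝ) : Sph 2 :=
  ⟨!₂[sin (π * q.1), cos (π * q.1) * cos (π * q.2), cos (π * q.1) * sin (π * q.2)], by
    rw [mem_sphere_zero_iff_norm, EuclideanSpace.norm_eq, Real.sqrt_eq_one, Fin.sum_univ_three]
    simp only [Real.norm_eq_abs, sq_abs, Matrix.cons_val]
    linear_combination sin_sq_add_cos_sq (π * q.1) +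
      cos (π * q.1) ^ 2 * sin_sq_add_cos_sq (π * q.2)⟩

theorem continuous_sphereParam : Continuous sphereParam := by
  refine Continuous.subtype_mk ((PiLp.continuous_toLp 2 _).comp (continuous_pi fun i ↦ ?_)) _
  fin_cases i <;> simp only [Fin.reduceFinMk, Matrix.cons_val] <;> fun_prop

theorem sphereParam_glide (v u : ℝ) : sphereParam (1 - v, u + 1) = sphereParam (v, u) := by
  simp only [sphereParam, mul_sub, mul_add, mul_one, sin_pi_sub, cos_pi_sub, sin_add_pi,
    cos_add_pi, neg_mul_neg]

theorem sphereParam_shift (v u : ℝ) : sphereParam (v + 1, u) = -sphereParam (v, u) := by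
  ext i
  fin_cases i <;>
    simp [sphereParam, mul_add, sin_add_pi, cos_add_pi]

/-- A grid point of one block, rescaled so that the period `N` becomes `1`. -/
def rescale (N : ℤ) (p : ℤ × ℤ) : ℝ × ℝ := (p.1 / N, p.2 / N)

/-- The image of a grid point of one block on the sphere. -/
def gridSphere (N : ℤ) (p : ℤ × ℤ) : Sph 2 := sphereParam (rescale N p)

theorem gridSphere_glide {N : ℤ} (hN : 0 < N) (p : ℤ × ℤ) :
    gridSphere N (glide N p) = gridSphere N p := by
  have hN' : (N : ℝ) ≠ 0 := Int.cast_ne_zero.2 hN.ne'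
  rw [gridSphere, gridSphere, rescale, rescale, ← sphereParam_glide (p.1 / N), glide, Int.cast_sub,
    Int.cast_add, sub_div, add_div, div_self hN']

theorem gridSphere_shift {N : ℤ} (hN : 0 < N) (p : ℤ × ℤ) :
    gridSphere N (shift N p) = -gridSphere N p := by
  have hN' : (N : ℝ) ≠ 0 := Int.cast_ne_zero.2 hN.ne'
  rw [gridSphere, gridSphere, rescale, rescale, ← sphereParam_shift, shift, Int.cast_add, add_div,
    div_self hN']

namespace GridSimplex

variable {n M : ℕ}

theorem abs_coord_sub_coord_le (y : GridSimplex n M) (k l : ℕ) (c : Fin n × Fin 2) :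
    |y.coord k c - y.coord l c| ≤ 1 := by
  obtain h | h := Int.units_eq_one_or (y.1 c).2 <;>
    simp only [coord, HalfEdge.outer, h] <;> split_ifs <;> simp

theorem dist_rescale_vertex_le (y : GridSimplex n M) (k l : Fin (n * 2 + 1)) :
    dist (rescale (2 * M) ∘ y.vertex k) (rescale (2 * M) ∘ y.vertex l) ≤ 1 / (2 * M) := by
  have coord_dist_le (c) : dist ((y.coord k c : ℝ) / (2 * M : ℤ)) (y.coord l c / (2 * M : ℤ)) ≤
      1 / (2 * M) := by
    rw [Real.dist_eq, ← sub_div, abs_div, Int.cast_mul, Int.cast_ofNat, Int.cast_natCast,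
      abs_of_nonneg (a := (2 * M : ℝ)) (by positivity)]
    exact div_le_div_of_nonneg_right (by exact_mod_cast y.abs_coord_sub_coord_le k l c)
      (by positivity)
  exact (dist_pi_le_iff (by positivity)).2 fun b ↦ max_le (coord_dist_le _) (coord_dist_le _)

variable [NeZero M]

theorem coord_mem_Icc (y : GridSimplex n M) (k : ℕ) (c : Fin n × Fin 2) :
    y.coord k c ∈ Set.Icc (0 : ℤ) (2 * M) := by
  unfold coord
  split_ifs
  · exact ⟨(y.1 c).outer_nonneg, (y.1 c).outer_le⟩
  · exact ⟨(y.1 c).inner_pos.le, (y.1 c).inner_lt.le⟩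

theorem rescale_vertex_mem_Icc (y : GridSimplex n M) (k : Fin (n * 2 + 1)) :
    rescale (2 * M) ∘ y.vertex k ∈ Set.Icc (0 : Fin n → ℝ × ℝ) 1 := by
  have scale_pos : (0 : ℝ) < (2 * M : ℤ) := by exact_mod_cast Nat.pos_of_neZero (2 * M)
  have nonneg (c) : 0 ≤ (y.coord k c : ℝ) / (2 * M : ℤ) :=
    div_nonneg (by exact_mod_cast (y.coord_mem_Icc k c).1) scale_pos.le
  have le_one (c) : (y.coord k c : ℝ) / (2 * M : ℤ) ≤ 1 :=
    (div_le_one scale_pos).2 (by exact_mod_cast (y.coord_mem_Icc k c).2)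
  exact ⟨fun b ↦ ⟨nonneg _, nonneg _⟩, fun b ↦ ⟨le_one _, le_one _⟩⟩

theorem exists_forall_rescale_vertex_mem {ι : Type*} {O : ι → Set (Fin n → ℝ × ℝ)}
    (isOpen : ∀ i, IsOpen (O i)) (cover : ⋃ i, O i = Set.univ) :
    ∃ M : ℕ, M ≠ 0 ∧ ∀ y : GridSimplex n M, ∃ i, ∀ k, rescale (2 * M) ∘ y.vertex k ∈ O i := by
  obtain ⟨δ, δ_pos, lebesgue⟩ := lebesgue_number_lemma_of_metric
    (isCompact_Icc (a := (0 : Fin n → ℝ × ℝ)) (b := 1)) isOpen (by simp [cover])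
  obtain ⟨K, hK⟩ := exists_nat_one_div_lt δ_pos
  refine ⟨K + 1, K.succ_ne_zero, fun y ↦ ?_⟩
  obtain ⟨i, hi⟩ := lebesgue _ (y.rescale_vertex_mem_Icc 0)
  refine ⟨i, fun k ↦ hi ((y.dist_rescale_vertex_le k 0).trans_lt (lt_of_le_of_lt ?_ hK))⟩
  rw [Nat.cast_succ]
  exact one_div_le_one_div_of_le (by positivity) (le_mul_of_one_le_left (by positivity) one_le_two)

end GridSimplex

end GridToSphere

section LowerBound

variable {n k : ℕ}

theorem HasSymPlanners.mono {X : Type*} [TopologicalSpace X] {l : ℕ} (h : HasSymPlanners X n k)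
    (hkl : k ≤ l) : HasSymPlanners X n l := by
  obtain ⟨d, rfl⟩ := Nat.exists_eq_add_of_le hkl
  obtain ⟨U, isOpen, cover, invariant, planner⟩ := h
  refine ⟨Fin.append U fun _ ↦ ∅, fun i ↦ ?_, ?_, fun i ρ x ↦ ?_, fun i ↦ ?_⟩
  · cases i using Fin.addCases <;> simp [isOpen]
  · refine Set.eq_univ_of_forall fun x ↦ ?_
    obtain ⟨i, hi⟩ := Set.mem_iUnion.1 (cover ▸ Set.mem_univ x)
    exact Set.mem_iUnion.2 ⟨Fin.castAdd d i, by rwa [Fin.append_left]⟩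
  · cases i using Fin.addCases with
    | left i => simpa only [Fin.append_left] using invariant i ρ x
    | right i => simp only [Fin.append_right, Set.mem_empty_iff_false, false_imp_iff]
  · cases i using Fin.addCases with
    | left i => rw [Fin.append_left]; exact planner i
    | right i =>
      rw [Fin.append_right]
      exact ⟨⟨fun x ↦ x.2.elim, continuous_of_discreteTopology⟩, fun x ↦ x.2.elim,
        fun x ↦ x.2.elim, fun x ↦ x.2.elim⟩

theorem exists_signs_constant_on_simplices (h : HasSymPlanners (RP 2) n k)
    {C : Fin k → Finset (Fin n)} (card : ∀ i, (C i).card = 2) :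
    ∃ g : Fin k → (Fin n → Sph 2) → ZMod 2,
      (∀ i y b, g i (Function.update y b (-y b)) = g i y + if b ∈ C i then 1 else 0) ∧
      (∀ i, C i = Finset.univ → ∀ (ρ : Equiv.Perm (Fin n)) y, g i (y ∘ ρ) = g i y) ∧
      ∃ M : ℕ, M ≠ 0 ∧ ∀ y : GridSimplex n M, ∃ i, ∀ j j',
        g i (gridSphere (2 * M) ∘ y.vertex j) = g i (gridSphere (2 * M) ∘ y.vertex j') := by
  obtain ⟨U, isOpen, cover, invariant, planner⟩ := h
  choose s start target equivariant using planner
  refine ⟨fun i ↦ RP.plannerSign (C i) (s i),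
    fun i y b ↦ RP.plannerSign_update_neg (target i) _ _ _, fun i hC ρ y ↦ ?_, ?_⟩
  · simp only [hC, RP.plannerSign_univ_comp_perm (invariant i) (equivariant i)]
  let level (q : Fin k × ZMod 2) : Set (Fin n → Sph 2) :=
    {y | RP.mk ∘ y ∈ U q.1} ∩ RP.plannerSign (C q.1) (s q.1) ⁻¹' {q.2}
  have continuous_mk_comp : Continuous fun y : Fin n → Sph 2 ↦ RP.mk ∘ y :=
    continuous_pi fun c ↦ RP.continuous_mk.comp (continuous_apply c)
  have continuous_param : Continuous fun p : Fin n → ℝ × ℝ ↦ sphereParam ∘ p :=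
    continuous_pi fun c ↦ continuous_sphereParam.comp (continuous_apply c)
  have level_isOpen (q) : IsOpen (level q) :=
    (RP.continuousOn_plannerSign (start q.1) (target q.1) (card q.1)).isOpen_inter_preimage
      ((isOpen q.1).preimage continuous_mk_comp) (isOpen_discrete _)
  have level_cover : ⋃ q, (fun p ↦ sphereParam ∘ p) ⁻¹' level q = Set.univ := by
    refine Set.eq_univ_of_forall fun p ↦ ?_
    obtain ⟨i, hi⟩ := Set.mem_iUnion.1 (cover ▸ Set.mem_univ (RP.mk ∘ sphereParam ∘ p))
    exact Set.mem_iUnion.2 ⟨(i, RP.plannerSign (C i) (s i) (sphereParam ∘ p)), hi, rfl⟩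
  obtain ⟨M, hM, hy⟩ := GridSimplex.exists_forall_rescale_vertex_mem
    (fun q ↦ (level_isOpen q).preimage continuous_param) level_cover
  refine ⟨M, hM, fun y ↦ ?_⟩
  obtain ⟨q, hq⟩ := hy y
  exact ⟨q.1, fun j j' ↦ (hq j).2.trans (hq j').2.symm⟩

variable {N : ℤ}

theorem gridSphere_comp_update_glide (hN : 0 < N) (p : GridPoint n) (b : Fin n) :
    gridSphere N ∘ Function.update p b (glide N (p b)) = gridSphere N ∘ p := by
  rw [Function.comp_update, gridSphere_glide hN, ← Function.comp_apply (f := gridSphere N),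
    Function.update_eq_self]

theorem gridSphere_comp_update_shift (hN : 0 < N) (p : GridPoint n) (b : Fin n) :
    gridSphere N ∘ Function.update p b (shift N (p b)) =
      Function.update (gridSphere N ∘ p) b (-(gridSphere N ∘ p) b) := by
  rw [Function.comp_update, gridSphere_shift hN, Function.comp_apply]

theorem not_hasSymPlanners_of_three_le (hn : 3 ≤ n) : ¬HasSymPlanners (RP 2) n (n * 2) := by
  intro h
  obtain ⟨g, g_neg, -, M, hM, constant⟩ := exists_signs_constant_on_simplices h
    (C := hubPair hn) fun i ↦ Finset.card_pair (hubPartner_ne hn i)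
  have : NeZero M := ⟨hM⟩
  have hN : (0 : ℤ) < 2 * M := by exact_mod_cast Nat.pos_of_neZero (2 * M)
  obtain ⟨y, hy⟩ := GridSimplex.exists_cupProd_factors_ne (ω := fun _ ↦ 1) (C := hubPair hn)
    (g := fun i p ↦ g i (gridSphere (2 * M) ∘ p))
    (GridSimplex.isCycleModulo_blockMoves (M := M) (by omega))
    (fun i ↦ twistedAlike_blockSumCochain hN
      (fun b p ↦ by rw [gridSphere_comp_update_glide hN])
      (fun b p ↦ by rw [gridSphere_comp_update_shift hN, g_neg]))
    sum_admissible_hubPair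
  obtain ⟨i, hi⟩ := constant y
  exact hy i (hi _ _)

theorem not_hasSymPlanners_two : ¬HasSymPlanners (RP 2) 2 (2 * 2) := by
  intro h
  obtain ⟨g, g_neg, g_perm, M, hM, constant⟩ := exists_signs_constant_on_simplices h
    (C := fun _ ↦ Finset.univ) fun _ ↦ Finset.card_fin 2
  have : NeZero M := ⟨hM⟩
  have hN : (0 : ℤ) < 2 * M := by exact_mod_cast Nat.pos_of_neZero (2 * M)
  obtain ⟨y, hy⟩ := GridSimplex.exists_cupProd_factors_ne (C := fun _ ↦ Finset.univ)
    (g := fun i p ↦ g i (gridSphere (2 * M) ∘ p))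
    (GridSimplex.isCycleModulo_exchangeMoves (M := M))
    (fun i ↦ twistedAlike_exchange hN
      (fun b p ↦ by rw [gridSphere_comp_update_glide hN])
      (fun b p ↦ by rw [gridSphere_comp_update_shift hN, g_neg, if_pos (Finset.mem_univ b)])
      (fun p ↦ by rw [← Function.comp_assoc, g_perm i rfl]))
    sum_admissible_two
  obtain ⟨i, hi⟩ := constant y
  exact hy i (hi _ _)

theorem two_mul_lt_of_hasSymPlanners (hn : 2 ≤ n) (h : HasSymPlanners (RP 2) n k) :
    2 * n < k := by
  by_contra! hk
  have h' := h.mono (hk.trans_eq (mul_comm 2 n))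
  obtain rfl | hn' := hn.eq_or_lt
  · exact not_hasSymPlanners_two h'
  · exact not_hasSymPlanners_of_three_le hn' h'

end LowerBound

section Dominance

variable {X : Type*} {m n : ℕ}

/-- The product of the chosen functions `P (d j)`, each evaluated at the `j`-th entry. -/
def monomial (P : Fin (m + 1) → X → ℝ) (d : Fin n → Fin (m + 1)) (x : Fin n → X) : ℝ :=
  ∏ j, P (d j) (x j)

/-- The sum of the indices chosen in a monomial. -/
def degree (d : Fin n → Fin (m + 1)) : ℕ := ∑ j, (d j : ℕ)

/-- The tuples at which a monomial is positive and exceeds all others of the same degree. -/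
def dominanceRegion (P : Fin (m + 1) → X → ℝ) (d : Fin n → Fin (m + 1)) : Set (Fin n → X) :=
  {x | 0 < monomial P d x ∧ ∀ e ≠ d, degree e = degree d → monomial P e x < monomial P d x}

theorem degree_le (d : Fin n → Fin (m + 1)) : degree d ≤ m * n := by
  calc degree d ≤ ∑ _ : Fin n, m := Finset.sum_le_sum fun j _ ↦ Fin.is_le (d j)
    _ = m * n := by rw [Finset.sum_const, Finset.card_fin, smul_eq_mul, mul_comm]

theorem degree_permTuple (ρ : Equiv.Perm (Fin n)) (d : Fin n → Fin (m + 1)) :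
    degree (permTuple ρ d) = degree d :=
  Equiv.sum_comp ρ fun j ↦ (d j : ℕ)

theorem permTuple_permTuple_symm (ρ : Equiv.Perm (Fin n)) (x : Fin n → X) :
    permTuple ρ (permTuple ρ.symm x) = x :=
  funext fun j ↦ congrArg x (ρ.symm_apply_apply j)

variable {P : Fin (m + 1) → X → ℝ}

theorem monomial_permTuple (ρ : Equiv.Perm (Fin n)) (d : Fin n → Fin (m + 1)) (x : Fin n → X) :
    monomial P (permTuple ρ d) (permTuple ρ x) = monomial P d x :=
  Equiv.prod_comp ρ fun j ↦ P (d j) (x j)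

theorem permTuple_mem_dominanceRegion (ρ : Equiv.Perm (Fin n)) {d : Fin n → Fin (m + 1)}
    {x : Fin n → X} (h : x ∈ dominanceRegion P d) :
    permTuple ρ x ∈ dominanceRegion P (permTuple ρ d) := by
  refine ⟨(monomial_permTuple ρ d x).symm ▸ h.1, fun e he degree_eq ↦ ?_⟩
  obtain ⟨e, rfl⟩ : ∃ e', permTuple ρ e' = e := ⟨_, permTuple_permTuple_symm ρ e⟩
  rw [monomial_permTuple, monomial_permTuple]
  rw [degree_permTuple, degree_permTuple] at degree_eq
  exact h.2 e (fun h ↦ he (congrArg _ h)) degree_eq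

theorem eq_of_mem_dominanceRegion {d e : Fin n → Fin (m + 1)} {x : Fin n → X}
    (hd : x ∈ dominanceRegion P d) (he : x ∈ dominanceRegion P e) (h : degree d = degree e) :
    d = e := by
  by_contra hne
  exact lt_asymm (he.2 d hne h) (hd.2 e (Ne.symm hne) h.symm)

theorem pos_of_mem_dominanceRegion (P_nonneg : ∀ k x, 0 ≤ P k x)
    {d : Fin n → Fin (m + 1)} {x : Fin n → X} (h : x ∈ dominanceRegion P d) (j : Fin n) :
    0 < P (d j) (x j) :=
  (P_nonneg _ _).lt_of_ne' (Finset.prod_ne_zero_iff.1 h.1.ne' j (Finset.mem_univ j))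

/-- If every entry is given its largest possible index, then all other monomials of the same degree
vanish. -/
theorem exists_mem_dominanceRegion (P_nonneg : ∀ k x, 0 ≤ P k x) (P_pos : ∀ x, ∃ k, 0 < P k x)
    (x : Fin n → X) : ∃ d : Fin n → Fin (m + 1), x ∈ dominanceRegion P d := by
  have greatest (j) : ∃ k, 0 < P k (x j) ∧ ∀ l, 0 < P l (x j) → l ≤ k := by
    obtain ⟨k₀, hk₀⟩ := P_pos (x j)
    obtain ⟨k, hk, le_k⟩ := Set.exists_max_image {k | 0 < P k (x j)} id (Set.toFinite _) ⟨k₀, hk₀⟩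
    exact ⟨k, hk, le_k⟩
  choose d d_pos le_d using greatest
  have monomial_pos : 0 < monomial P d x := Finset.prod_pos fun j _ ↦ d_pos j
  refine ⟨d, monomial_pos, fun e he degree_eq ↦ lt_of_not_ge fun h ↦ he ?_⟩
  have e_ne_zero := Finset.prod_ne_zero_iff.1 (monomial_pos.trans_le h).ne'
  have e_le (j) : e j ≤ d j := le_d j _ ((P_nonneg _ _).lt_of_ne' (e_ne_zero j (Finset.mem_univ j)))
  exact funext fun j ↦ Fin.ext <|
    (Finset.sum_eq_sum_iff_of_le fun j _ ↦ Fin.le_iff_val_le_val.1 (e_le j)).1 degree_eq j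
      (Finset.mem_univ j)

variable [TopologicalSpace X]

theorem isOpen_dominanceRegion (P_cont : ∀ k, Continuous (P k)) (d : Fin n → Fin (m + 1)) :
    IsOpen (dominanceRegion P d) := by
  have continuous_monomial (e : Fin n → Fin (m + 1)) : Continuous (monomial P e) :=
    continuous_finsetProd _ fun j _ ↦ (P_cont _).comp (continuous_apply j)
  simp only [dominanceRegion, Set.ofPred_and, Set.ofPred_forall]
  exact (isOpen_lt continuous_const (continuous_monomial d)).inter <|
    isOpen_iInter_of_finite fun e ↦ isOpen_iInter_of_finite fun _ ↦
      isOpen_iInter_of_finite fun _ ↦ isOpen_lt (continuous_monomial e) (continuous_monomial d)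

theorem hasSymPlanners_of_contractions (P_cont : ∀ k, Continuous (P k))
    (P_nonneg : ∀ k x, 0 ≤ P k x) (P_pos : ∀ x, ∃ k, 0 < P k x) {x₀ : X}
    {γ : Fin (m + 1) → X → C(I, X)} (γ_cont : ∀ k, ContinuousOn (γ k) {x | 0 < P k x})
    (source : ∀ k x, 0 < P k x → γ k x 0 = x₀)
    (target : ∀ k x, 0 < P k x → γ k x 1 = x) : HasSymPlanners X n (m * n + 1) := by
  let U (k : Fin (m * n + 1)) : Set (Fin n → X) :=
    {x | ∃ d : Fin n → Fin (m + 1), degree d = k ∧ x ∈ dominanceRegion P d}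
  refine ⟨U, fun k ↦ ?_, ?_, fun k ρ x ⟨d, hd, hx⟩ ↦ ?_, fun k ↦ ?_⟩
  · simp only [U, Set.ofPred_exists, Set.ofPred_and]
    exact isOpen_iUnion fun d ↦ isOpen_const.inter (isOpen_dominanceRegion P_cont d)
  · refine Set.eq_univ_of_forall fun x ↦ ?_
    obtain ⟨d, hd⟩ := exists_mem_dominanceRegion P_nonneg P_pos x
    exact Set.mem_iUnion.2 ⟨⟨degree d, Nat.lt_succ_of_le (degree_le d)⟩, d, rfl, hd⟩
  · exact ⟨permTuple ρ d, (degree_permTuple ρ d).trans hd, permTuple_mem_dominanceRegion ρ hx⟩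
  have dominating (x : U k) : ∃ d, degree d = k ∧ (x : Fin n → X) ∈ dominanceRegion P d := x.2
  choose D degree_D mem_D using dominating
  have D_eq (x : U k) {d : Fin n → Fin (m + 1)} (hd : degree d = k)
      (hx : (x : Fin n → X) ∈ dominanceRegion P d) : D x = d :=
    eq_of_mem_dominanceRegion (mem_D x) hx ((degree_D x).trans hd.symm)
  have pos (x : U k) (j) : 0 < P (D x j) (x.1 j) := pos_of_mem_dominanceRegion P_nonneg (mem_D x) j
  refine ⟨⟨fun x j ↦ γ (D x j) (x.1 j), continuous_pi fun j ↦ ?_⟩, fun x j j' ↦ ?_,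
    fun x j ↦ target _ _ (pos x j), fun x ρ hx ↦ ?_⟩
  · refine continuous_iff_continuousAt.2 fun x ↦ ?_
    have near : ∀ᶠ z : U k in nhds x, D x = D z :=
      (continuousAt_subtype_val.eventually
        ((isOpen_dominanceRegion P_cont _).mem_nhds (mem_D x))).mono
        fun z hz ↦ (D_eq z (degree_D x) hz).symm
    have fixed : ContinuousAt (fun z : U k ↦ γ (D x j) (z.1 j)) x :=
      ContinuousAt.comp (f := fun z : U k ↦ z.1 j) (g := γ (D x j))
        ((γ_cont _).continuousAt ((isOpen_lt continuous_const (P_cont _)).mem_nhds (pos x j)))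
        ((continuous_apply j).comp continuous_subtype_val).continuousAt
    exact fixed.congr (near.mono fun z hz ↦ by simp only [hz])
  · exact (source _ _ (pos x j)).trans (source _ _ (pos x j')).symm
  · have D_perm : D ⟨permTuple ρ x, hx⟩ = permTuple ρ (D x) :=
      D_eq _ ((degree_permTuple ρ _).trans (degree_D x)) (permTuple_mem_dominanceRegion ρ (mem_D x))
    funext j
    simp only [ContinuousMap.coe_mk, D_perm]
    rfl

end Dominance

section UpperBound

namespace RP

variable {m : ℕ}

theorem isQuotientMap_mk : Topology.IsQuotientMap (mk : Sph m → RP m) := isQuotientMap_quotient_mk'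

/-- The line spanned by a nonzero vector. -/
def ofVector (w : {w : EuclideanSpace ℝ (Fin (m + 1)) // w ≠ 0}) : RP m :=
  mk ⟨NormedSpace.normalize w.1,
    mem_sphere_zero_iff_norm.2 (NormedSpace.norm_normalize_eq_one_iff.2 w.2)⟩

theorem continuous_ofVector : Continuous (ofVector (m := m)) :=
  continuous_mk.comp <| Continuous.subtype_mk
    ((continuous_subtype_val.norm.inv₀ fun w ↦ norm_ne_zero_iff.2 w.2).smul
      continuous_subtype_val) _

theorem ofVector_smul {y : Sph m} {r : ℝ} (h : r • y.1 ≠ 0) : ofVector ⟨r • y.1, h⟩ = mk y := by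
  have normalize_eq : NormedSpace.normalize y.1 = y.1 :=
    NormedSpace.normalize_eq_self_of_norm_eq_one (mem_sphere_zero_iff_norm.1 y.2)
  rw [ofVector, mk_eq_mk_iff]
  obtain hr | hr := (left_ne_zero_of_smul h).lt_or_gt
  · exact .inr <| Subtype.ext <|
      (NormedSpace.normalize_smul_of_neg hr _).trans (congrArg Neg.neg normalize_eq)
  · exact .inl <| Subtype.ext <| (NormedSpace.normalize_smul_of_pos hr _).trans normalize_eq

/-- The representative of a line obtained by scaling a unit vector on it by its `k`-th coordinate,
which does not depend on the choice of the unit vector. -/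
def scaledRep (k : Fin (m + 1)) : RP m → EuclideanSpace ℝ (Fin (m + 1)) :=
  Quotient.lift (s := antipodalSetoid m) (fun y : Sph m ↦ y.1 k • y.1) fun y z h ↦ by
    obtain h | h := h
    · simp only [h]
    · simp only [h, PiLp.neg_apply, neg_smul_neg]

theorem scaledRep_mk (k : Fin (m + 1)) (y : Sph m) : scaledRep k (mk y) = y.1 k • y.1 := rfl

theorem continuous_scaledRep (k : Fin (m + 1)) : Continuous (scaledRep (m := m) k) := by
  refine isQuotientMap_mk.continuous_iff.2 ?_
  change Continuous fun y : Sph m ↦ y.1 k • y.1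
  fun_prop

/-- The square of the `k`-th coordinate of a unit vector on a line. -/
def sqCoord (k : Fin (m + 1)) (x : RP m) : ℝ := scaledRep k x k

theorem sqCoord_mk (k : Fin (m + 1)) (y : Sph m) : sqCoord k (mk y) = y.1 k ^ 2 := by
  rw [sqCoord, scaledRep_mk, PiLp.smul_apply, smul_eq_mul, sq]

theorem continuous_sqCoord (k : Fin (m + 1)) : Continuous (sqCoord (m := m) k) :=
  (EuclideanSpace.proj (𝕜 := ℝ) k).continuous.comp (continuous_scaledRep k)

theorem sqCoord_nonneg (k : Fin (m + 1)) (x : RP m) : 0 ≤ sqCoord k x := by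
  obtain ⟨y, rfl⟩ := isQuotientMap_mk.surjective x
  exact sqCoord_mk k y ▸ sq_nonneg _

theorem exists_sqCoord_pos (x : RP m) : ∃ k, 0 < sqCoord k x := by
  obtain ⟨y, rfl⟩ := isQuotientMap_mk.surjective x
  simp only [sqCoord_mk, sq_pos_iff]
  by_contra! h
  exact ne_zero_of_mem_unit_sphere y (PiLp.ext h)

/-- The segment from the vector with all entries equal to `1` to the `k`-th scaled representative,
which avoids the origin because its `k`-th coordinate stays positive. -/
def segment (k : Fin (m + 1)) (q : {x : RP m // 0 < sqCoord k x} × I) :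
    {w : EuclideanSpace ℝ (Fin (m + 1)) // w ≠ 0} :=
  ⟨(1 - (q.2 : ℝ)) • WithLp.toLp 2 1 + (q.2 : ℝ) • scaledRep k q.1.1, fun h ↦ by
    have coord_pos : 0 < (1 - (q.2 : ℝ)) * 1 + q.2 * sqCoord k q.1.1 :=
      convex_Ioi (0 : ℝ) one_pos q.1.2 (unitInterval.one_minus_nonneg q.2)
        (unitInterval.nonneg q.2) (sub_add_cancel _ _)
    exact coord_pos.ne' (congrArg (fun w ↦ w k) h)⟩

theorem continuous_segment (k : Fin (m + 1)) : Continuous (segment (m := m) k) := by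
  have := continuous_scaledRep (m := m) k
  unfold segment
  fun_prop

open Classical in
/-- A contraction, along segments, of the region where the `k`-th coordinate does not vanish;
outside of this region the paths are constant. -/
def contraction (k : Fin (m + 1)) (x : RP m) : C(I, RP m) :=
  if h : 0 < sqCoord k x then
    ⟨fun t ↦ ofVector (segment k (⟨x, h⟩, t)),
      continuous_ofVector.comp ((continuous_segment k).comp (by fun_prop))⟩
  else .const I x

theorem contraction_apply {k : Fin (m + 1)} {x : RP m} (h : 0 < sqCoord k x) (t : I) :
    contraction k x t = ofVector (segment k (⟨x, h⟩, t)) := by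
  rw [contraction, dif_pos h, ContinuousMap.coe_mk]

theorem continuousOn_contraction (k : Fin (m + 1)) :
    ContinuousOn (contraction (m := m) k) {x | 0 < sqCoord k x} := by
  rw [continuousOn_iff_continuous_domRestrict]
  let paths := ContinuousMap.curry ⟨_, continuous_ofVector.comp (continuous_segment (m := m) k)⟩
  exact paths.continuous.congr fun x ↦ ContinuousMap.ext fun t ↦ (contraction_apply x.2 t).symm

theorem contraction_one {k : Fin (m + 1)} {x : RP m} (h : 0 < sqCoord k x) :
    contraction k x 1 = x := by
  obtain ⟨y, rfl⟩ := isQuotientMap_mk.surjective x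
  have segment_one : (segment k (⟨mk y, h⟩, 1)).1 = y.1 k • y.1 := by
    simp [segment, scaledRep_mk]
  calc contraction k (mk y) 1 = ofVector (segment k (⟨mk y, h⟩, 1)) := contraction_apply h 1
    _ = ofVector ⟨y.1 k • y.1, segment_one ▸ (segment k _).2⟩ :=
      congrArg ofVector (Subtype.ext segment_one)
    _ = mk y := ofVector_smul _

theorem contraction_zero {k : Fin (m + 1)} {x : RP m} (h : 0 < sqCoord k x) :
    contraction k x 0 = ofVector ⟨WithLp.toLp 2 1, by simp⟩ := by
  rw [contraction_apply h]
  exact congrArg ofVector (Subtype.ext (by simp [segment]))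

theorem hasSymPlanners (m n : ℕ) : HasSymPlanners (RP m) n (m * n + 1) :=
  hasSymPlanners_of_contractions continuous_sqCoord sqCoord_nonneg exists_sqCoord_pos
    continuousOn_contraction (fun _ _ ↦ contraction_zero) fun _ _ ↦ contraction_one

end RP

end UpperBound

end

/-- For every `n ≥ 2`, `TC^Σ_n(ℝP^2) = 2n + 1`. -/
theorem TCsym_projective_plane (n : ℕ) (hn : 2 ≤ n) :
    TCsym (RP 2) n = ((2 * n + 1 : ℕ) : ℕ∞) := by
  refine le_antisymm (sInf_le ⟨_, rfl, RP.hasSymPlanners 2 n⟩) (le_sInf ?_)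
  rintro _ ⟨k, rfl, planners⟩
  exact_mod_cast two_mul_lt_of_hasSymPlanners hn planners
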